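/- arXiv:1904.02236 — 3 statements merged into one kernel-verified Lean document; each statement's English description precedes it below -/
import Mathlib

section
/- Let g₀ be a complete warped Berger metric on ℝ⁴ with bounded curvature and c ≤ b. Then for any s₀ > 0 there exists δ > 0 such that b(s) ≥ δ for all s ≥ s₀. -/
open Set Filter Topology

noncomputable section

/-- A complete warped Berger metric on `ℝ⁴`,
`g = ds² + b²(s)(σ₁² + σ₂²) + c²(s) σ₃²` in the arclength coordinate `s ∈ (0,∞)`,
given by smooth positive functions `b, c` on `(0,∞)` extending to smooth odd functions
at `s = 0` with `b_s(0) = c_s(0) = 1`, satisfying the Berger ordering `c ≤ b`. -/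
structure WarpedBergerMetric where
  b : ℝ → ℝ
  c : ℝ → ℝ
  smooth_b : ContDiffOn ℝ (⊤ : ℕ∞) b (Ioi 0)
  smooth_c : ContDiffOn ℝ (⊤ : ℕ∞) c (Ioi 0)
  b_pos : ∀ s > 0, 0 < b s
  c_pos : ∀ s > 0, 0 < c s
  /-- Smoothness at the origin: `b → 0` as `s → 0⁺`. -/
  b_origin : Tendsto b (𝓝[>] 0) (𝓝 0)
  c_origin : Tendsto c (𝓝[>] 0) (𝓝 0)
  /-- Smoothness at the origin: `b_s → 1` as `s → 0⁺`. -/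
  bs_origin : Tendsto (deriv b) (𝓝[>] 0) (𝓝 1)
  cs_origin : Tendsto (deriv c) (𝓝[>] 0) (𝓝 1)
  /-- The Berger ordering `c ≤ b`. -/
  ordered : ∀ s > 0, c s ≤ b s

namespace WarpedBergerMetric

variable (g : WarpedBergerMetric)

/-- Sectional curvature `k12 = (4b² − 3c²)/b⁴ − b_s²/b²`. -/
def k12 (s : ℝ) : ℝ :=
  (4 * (g.b s) ^ 2 - 3 * (g.c s) ^ 2) / (g.b s) ^ 4 - (deriv g.b s) ^ 2 / (g.b s) ^ 2
/-- Sectional curvature `k13 = c²/b⁴ − b_s c_s/(b c)`. -/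
def k13 (s : ℝ) : ℝ :=
  (g.c s) ^ 2 / (g.b s) ^ 4 - deriv g.b s * deriv g.c s / (g.b s * g.c s)
/-- Sectional curvature `k01 = −b_ss/b`. -/
def k01 (s : ℝ) : ℝ := -(deriv (deriv g.b) s) / g.b s
/-- Sectional curvature `k03 = −c_ss/c`. -/
def k03 (s : ℝ) : ℝ := -(deriv (deriv g.c) s) / g.c s
/-- `|Rm| = |k12| + |k13| + |k01| + |k03|`. -/
def RmNorm (s : ℝ) : ℝ := |g.k12 s| + |g.k13 s| + |g.k01 s| + |g.k03 s|

/-- Bounded curvature: `|Rm| ≤ α` on `(0,∞)` for some `α > 0`. -/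
def BoundedCurvature : Prop := ∃ α > 0, ∀ s > 0, g.RmNorm s ≤ α

end WarpedBergerMetric

/-! The upper bound `k12 ≤ α` together with `c ≤ b` gives `b_s² ≥ 1 - α b²`, so `b` has no critical
point at a height below `1 / √α`. If `b s₁ < min (b s₀) (1 / √α)`, then `b` cannot turn around after
`s₁`: it keeps decreasing, at speed at least `√(1 - α (b s₁)²)`, and so becomes negative. -/

theorem antitoneOn_Ici_of_forall_isLocalMin_lt {X Y : Type*} [LinearOrder X] [TopologicalSpace X]
    [OrderClosedTopology X] [CompactIccSpace X] [LinearOrder Y] [TopologicalSpace Y]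
    [ClosedIicTopology Y] {f : X → Y} {a s : X} (hf : ContinuousOn f (Ici a)) (has : a ≤ s)
    (hsa : f s < f a) (hmin : ∀ t > a, IsLocalMin f t → f s < f t) : AntitoneOn f (Ici s) := by
  have later_le {u v : X} (hau : a ≤ u) (huv : u ≤ v) (hus : f u ≤ f s) : f v ≤ f u := by
    obtain ⟨m, ⟨ham, hmv⟩, hm⟩ :=
      isCompact_Icc.exists_isMinOn ⟨u, hau, huv⟩ (hf.mono (fun _ ht => ht.1))
    have hmu : f m ≤ f u := hm ⟨hau, huv⟩
    have ham' : a < m := ham.lt_of_ne fun h => ((hmu.trans hus).trans_lt hsa).ne (by rw [h])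
    rcases hmv.eq_or_lt with rfl | hmv
    · exact hmu
    · have hloc : IsLocalMin f m := hm.isLocalMin (Icc_mem_nhds ham' hmv)
      exact absurd (hmu.trans hus) (hmin m ham' hloc).not_ge
  exact fun u hu v _ huv => later_le (has.trans hu) huv (later_le has hu le_rfl)

theorem not_bddBelow_image_Ici_of_hasDerivAt_le_neg {f f' : ℝ → ℝ} {a ε : ℝ}
    (hf : ContinuousOn f (Ici a)) (hf' : ∀ t > a, HasDerivAt f (f' t) t) (hε : 0 < ε)
    (hle : ∀ t > a, f' t ≤ -ε) : ¬BddBelow (f '' Ici a) := by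
  rintro ⟨m, hm⟩
  have linear_bound (u : ℝ) (hu : a ≤ u) : f u - f a ≤ -ε * (u - a) := by
    refine (convex_Ici a).image_sub_le_mul_sub_of_deriv_le hf ?_ ?_ a self_mem_Ici u hu hu <;>
      rw [interior_Ici]
    · exact fun t ht => (hf' t ht).differentiableAt.differentiableWithinAt
    · exact fun t ht => (hf' t ht).deriv.trans_le (hle t ht)
  have hma : m ≤ f a := hm (mem_image_of_mem f self_mem_Ici)
  have hau : a ≤ a + (f a - m + 1) / ε := by
    have : 0 ≤ (f a - m + 1) / ε := div_nonneg (by linarith) hε.le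
    linarith
  have hmu := hm (mem_image_of_mem f hau)
  have hdrop := linear_bound _ hau
  rw [add_sub_cancel_left, neg_mul, mul_div_cancel₀ _ hε.ne'] at hdrop
  linarith

theorem min_le_of_bddBelow_of_le_abs_hasDerivAt {f f' : ℝ → ℝ} {a η : ℝ}
    (hf : ContinuousOn f (Ici a)) (hf' : ∀ t > a, HasDerivAt f (f' t) t)
    (hbdd : BddBelow (f '' Ici a))
    (hsteep : ∀ s ≥ a, f s < η → ∃ ε > 0, ∀ t > a, f t ≤ f s → ε ≤ |f' t|) :
    ∀ s ≥ a, min (f a) η ≤ f s := by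
  intro s has
  by_contra! hlt
  obtain ⟨hsa, hsη⟩ := lt_min_iff.mp hlt
  obtain ⟨ε, hε, hε_le⟩ := hsteep s has hsη
  have no_low_min : ∀ t > a, IsLocalMin f t → f s < f t := by
    intro t ht hloc
    by_contra! hts
    have := hε_le t ht hts
    rw [hloc.hasDerivAt_eq_zero (hf' t ht), abs_zero] at this
    exact this.not_gt hε
  have hanti : AntitoneOn f (Ici s) :=
    antitoneOn_Ici_of_forall_isLocalMin_lt hf has hsa no_low_min
  have hf's (t : ℝ) (ht : s < t) : HasDerivAt f (f' t) t := hf' t (has.trans_lt ht)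
  have hdecay (t : ℝ) (ht : s < t) : f' t ≤ -ε := by
    have hnonpos : f' t ≤ 0 := by
      rw [← (hf's t ht).deriv, ← derivWithin_of_mem_nhds (Ici_mem_nhds ht)]
      exact hanti.derivWithin_nonpos
    have habs := hε_le t (has.trans_lt ht) (hanti self_mem_Ici ht.le ht.le)
    rw [abs_of_nonpos hnonpos] at habs
    exact le_neg_of_le_neg habs
  have hsub : Ici s ⊆ Ici a := Ici_subset_Ici.mpr has
  exact not_bddBelow_image_Ici_of_hasDerivAt_le_neg (hf.mono hsub) hf's hε hdecay
    (hbdd.mono (image_mono hsub))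

theorem one_sub_mul_sq_le_sq_of_k12_le {b b' c α : ℝ} (hb : 0 < b) (hcb : |c| ≤ b)
    (hk12 : (4 * b ^ 2 - 3 * c ^ 2) / b ^ 4 - b' ^ 2 / b ^ 2 ≤ α) : 1 - α * b ^ 2 ≤ b' ^ 2 := by
  have hsq : c ^ 2 ≤ b ^ 2 := sq_le_sq' (abs_le.mp hcb).1 (abs_le.mp hcb).2
  have hfiber : 1 / b ^ 2 ≤ (4 * b ^ 2 - 3 * c ^ 2) / b ^ 4 :=
    calc 1 / b ^ 2 = b ^ 2 / b ^ 4 := by field_simp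
      _ ≤ (4 * b ^ 2 - 3 * c ^ 2) / b ^ 4 := by gcongr; linarith
  have hquot : (1 - b' ^ 2) / b ^ 2 ≤ α := by rw [sub_div]; linarith
  linarith [(div_le_iff₀ (by positivity)).mp hquot]

theorem warpedBerger_b_lower_bound_general {b b' c : ℝ → ℝ} {a α : ℝ} (hα : 0 < α)
    (hb : ContinuousOn b (Ici a)) (hb' : ∀ s > a, HasDerivAt b (b' s) s)
    (hpos : ∀ s ≥ a, 0 < b s) (hcb : ∀ s > a, |c s| ≤ b s)
    (hk12 : ∀ s > a, (4 * b s ^ 2 - 3 * c s ^ 2) / b s ^ 4 - b' s ^ 2 / b s ^ 2 ≤ α) :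
    ∀ s ≥ a, min (b a) (√α)⁻¹ ≤ b s := by
  have hbdd : BddBelow (b '' Ici a) := ⟨0, forall_mem_image.mpr fun s hs => (hpos s hs).le⟩
  refine min_le_of_bddBelow_of_le_abs_hasDerivAt hb hb' hbdd fun s hs hlt => ?_
  have hlow : α * b s ^ 2 < 1 := by
    rw [← one_div, lt_div_iff₀' (by positivity)] at hlt
    calc α * b s ^ 2 = (√α * b s) ^ 2 := by rw [mul_pow, Real.sq_sqrt hα.le]
      _ < 1 := pow_lt_one₀ (mul_nonneg (by positivity) (hpos s hs).le) hlt two_ne_zero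
  refine ⟨√(1 - α * b s ^ 2), Real.sqrt_pos.mpr (sub_pos.mpr hlow), fun t ht hts => ?_⟩
  have hbt : 0 < b t := hpos t ht.le
  calc √(1 - α * b s ^ 2) ≤ √(1 - α * b t ^ 2) := by gcongr
    _ ≤ √(b' t ^ 2) :=
      Real.sqrt_le_sqrt (one_sub_mul_sq_le_sq_of_k12_le hbt (hcb t ht) (hk12 t ht))
    _ = |b' t| := Real.sqrt_sq_eq_abs _

namespace WarpedBergerMetric

variable (g : WarpedBergerMetric)

theorem hasDerivAt_b {s : ℝ} (hs : 0 < s) : HasDerivAt g.b (deriv g.b s) s :=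
  ((g.smooth_b.contDiffAt (Ioi_mem_nhds hs)).differentiableAt (by simp)).hasDerivAt

theorem abs_c_le_b {s : ℝ} (hs : 0 < s) : |g.c s| ≤ g.b s :=
  (abs_of_pos (g.c_pos s hs)).trans_le (g.ordered s hs)

theorem k12_le_rmNorm (s : ℝ) : g.k12 s ≤ g.RmNorm s := by
  unfold RmNorm
  linarith [le_abs_self (g.k12 s), abs_nonneg (g.k13 s), abs_nonneg (g.k01 s),
    abs_nonneg (g.k03 s)]

theorem min_le_b {α s₀ : ℝ} (hα : 0 < α) (hk12 : ∀ s > s₀, g.k12 s ≤ α) (hs₀ : 0 < s₀) :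
    ∀ s ≥ s₀, min (g.b s₀) (√α)⁻¹ ≤ g.b s :=
  warpedBerger_b_lower_bound_general hα
    (fun _ hs => (g.hasDerivAt_b (hs₀.trans_le hs)).continuousAt.continuousWithinAt)
    (fun _ hs => g.hasDerivAt_b (hs₀.trans hs)) (fun s hs => g.b_pos s (hs₀.trans_le hs))
    (fun _ hs => g.abs_c_le_b (hs₀.trans hs)) hk12

end WarpedBergerMetric

/-- for any `s₀ > 0` there exists `δ > 0` with `b(s) ≥ δ` for all `s ≥ s₀`. -/
theorem warpedBerger_b_lower_bound (g : WarpedBergerMetric) (hBC : g.BoundedCurvature) :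
    ∀ s₀ > 0, ∃ δ > 0, ∀ s ≥ s₀, δ ≤ g.b s := by
  obtain ⟨α, hα, hRm⟩ := hBC
  exact fun s₀ hs₀ => ⟨min (g.b s₀) (√α)⁻¹, lt_min (g.b_pos s₀ hs₀) (by positivity),
    g.min_le_b hα (fun s hs => (g.k12_le_rmNorm s).trans (hRm s (hs₀.trans hs))) hs₀⟩
end
end

section
/- Let g₀ be a complete warped Berger metric on ℝ⁴ with bounded curvature and c ≤ b. Then there exist M > 0 and α > 0 such that |c_s(s)| + |b_s(s)| ≤ M·exp(α s) for all s > 0. -/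
open Set Filter Topology

noncomputable section

/-!
A bound on `|k01|` and `|k03|` says that `b` and `c` solve linear inequalities `|f''| ≤ α |f|`.
For such an `f` the phase curve `(f, f')` moves with speed at most `max 1 α` times its norm, so
by Grönwall's inequality, run forwards and backwards from `s = 1`, its norm at `s` is at most a
constant times `exp (max 1 α * |s - 1|)`.
-/

section Gronwall

variable {E : Type*} [NormedAddCommGroup E] [NormedSpace ℝ E] {S : Set ℝ} {K α x y : ℝ}

theorem norm_right_le_mul_exp_of_norm_deriv_le {u u' : ℝ → E} (hxy : x ≤ y)
    (hu : ∀ t ∈ Icc x y, HasDerivWithinAt u (u' t) (Icc x y) t)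
    (hbound : ∀ t ∈ Icc x y, ‖u' t‖ ≤ K * ‖u t‖) :
    ‖u y‖ ≤ ‖u x‖ * Real.exp (K * (y - x)) := by
  have hright : ∀ t ∈ Ico x y, HasDerivWithinAt u (u' t) (Ici t) t := fun t ht =>
    ((hu t (Ico_subset_Icc_self ht)).mono (Icc_subset_Icc_left ht.1)).mono_of_mem_nhdsWithin
      (Icc_mem_nhdsGE ht.2)
  rw [← gronwallBound_ε0]
  exact norm_le_gronwallBound_of_norm_deriv_right_le
    (fun t ht => (hu t ht).continuousWithinAt) hright le_rfl
    (fun t ht => by simpa only [add_zero] using hbound t (Ico_subset_Icc_self ht))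
    y (right_mem_Icc.2 hxy)

theorem norm_left_le_mul_exp_of_norm_deriv_le {u u' : ℝ → E} (hxy : x ≤ y)
    (hu : ∀ t ∈ Icc x y, HasDerivWithinAt u (u' t) (Icc x y) t)
    (hbound : ∀ t ∈ Icc x y, ‖u' t‖ ≤ K * ‖u t‖) :
    ‖u x‖ ≤ ‖u y‖ * Real.exp (K * (y - x)) := by
  have hmaps : MapsTo Neg.neg (Icc (-y) (-x)) (Icc x y) := fun t ht =>
    ⟨le_neg_of_le_neg ht.2, neg_le_of_neg_le ht.1⟩
  have hreversed : ∀ t ∈ Icc (-y) (-x),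
      HasDerivWithinAt (fun τ => u (-τ)) (-u' (-t)) (Icc (-y) (-x)) t := fun t ht => by
    simpa only [Function.comp_def, neg_smul, one_smul] using
      (hu (-t) (hmaps ht)).scomp t (hasDerivAt_neg t).hasDerivWithinAt hmaps
  have hreversed_bound : ∀ t ∈ Icc (-y) (-x), ‖-u' (-t)‖ ≤ K * ‖u (-t)‖ := fun t ht => by
    simpa only [norm_neg] using hbound (-t) (hmaps ht)
  simpa only [neg_neg, neg_sub_neg] using
    norm_right_le_mul_exp_of_norm_deriv_le (neg_le_neg hxy) hreversed hreversed_bound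

theorem norm_le_mul_exp_abs_sub_of_norm_deriv_le [S.OrdConnected] {u u' : ℝ → E}
    (hu : ∀ t ∈ S, HasDerivWithinAt u (u' t) S t) (hbound : ∀ t ∈ S, ‖u' t‖ ≤ K * ‖u t‖)
    (hx : x ∈ S) (hy : y ∈ S) :
    ‖u y‖ ≤ ‖u x‖ * Real.exp (K * |y - x|) := by
  rcases le_total x y with hxy | hyx
  · have hsub : Icc x y ⊆ S := S.Icc_subset hx hy
    rw [abs_of_nonneg (sub_nonneg.2 hxy)]
    exact norm_right_le_mul_exp_of_norm_deriv_le hxy (fun t ht => (hu t (hsub ht)).mono hsub)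
      (fun t ht => hbound t (hsub ht))
  · have hsub : Icc y x ⊆ S := S.Icc_subset hy hx
    rw [abs_sub_comm, abs_of_nonneg (sub_nonneg.2 hyx)]
    exact norm_left_le_mul_exp_of_norm_deriv_le hyx (fun t ht => (hu t (hsub ht)).mono hsub)
      (fun t ht => hbound t (hsub ht))

theorem norm_deriv_le_mul_exp_abs_sub_of_norm_deriv2_le [S.OrdConnected] {f f' f'' : ℝ → E}
    (hf : ∀ t ∈ S, HasDerivWithinAt f (f' t) S t)
    (hf' : ∀ t ∈ S, HasDerivWithinAt f' (f'' t) S t)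
    (hbound : ∀ t ∈ S, ‖f'' t‖ ≤ α * ‖f t‖) (hx : x ∈ S) (hy : y ∈ S) :
    ‖f' y‖ ≤ max ‖f x‖ ‖f' x‖ * Real.exp (max 1 α * |y - x|) := by
  have hphase : ∀ t ∈ S, ‖(f' t, f'' t)‖ ≤ max 1 α * ‖(f t, f' t)‖ := fun t ht => by
    refine max_le ?_ ((hbound t ht).trans ?_)
    · calc ‖f' t‖ = 1 * ‖f' t‖ := (one_mul _).symm
        _ ≤ max 1 α * ‖(f t, f' t)‖ := by
          gcongr
          exacts [le_max_left 1 α, le_max_right ‖f t‖ ‖f' t‖]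
    · gcongr
      exacts [le_max_right 1 α, le_max_left ‖f t‖ ‖f' t‖]
  exact (le_max_right ‖f y‖ ‖f' y‖).trans
    (norm_le_mul_exp_abs_sub_of_norm_deriv_le (fun t ht => (hf t ht).prodMk (hf' t ht)) hphase
      hx hy)

theorem norm_deriv_le_mul_exp_of_norm_deriv2_le {f : ℝ → E} (hf : DifferentiableOn ℝ f (Ioi 0))
    (hf' : DifferentiableOn ℝ (deriv f) (Ioi 0))
    (hbound : ∀ s > 0, ‖deriv (deriv f) s‖ ≤ α * ‖f s‖) {s : ℝ} (hs : 0 < s) :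
    ‖deriv f s‖ ≤ max ‖f 1‖ ‖deriv f 1‖ * Real.exp (max 1 α * (s + 1)) := by
  have habs : |s - 1| ≤ s + 1 := by
    simpa only [abs_one, abs_of_pos hs] using abs_sub s 1
  calc ‖deriv f s‖
      ≤ max ‖f 1‖ ‖deriv f 1‖ * Real.exp (max 1 α * |s - 1|) :=
        norm_deriv_le_mul_exp_abs_sub_of_norm_deriv2_le (S := Ioi 0)
          (fun t ht => (hf.hasDerivAt (Ioi_mem_nhds ht)).hasDerivWithinAt)
          (fun t ht => (hf'.hasDerivAt (Ioi_mem_nhds ht)).hasDerivWithinAt)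
          hbound (mem_Ioi.2 one_pos) hs
    _ ≤ max ‖f 1‖ ‖deriv f 1‖ * Real.exp (max 1 α * (s + 1)) := by gcongr

end Gronwall

namespace WarpedBergerMetric

variable {g : WarpedBergerMetric} {s α : ℝ}

theorem abs_k01_le_RmNorm : |g.k01 s| ≤ g.RmNorm s := by
  unfold RmNorm
  linarith [abs_nonneg (g.k12 s), abs_nonneg (g.k13 s), abs_nonneg (g.k03 s)]

theorem abs_k03_le_RmNorm : |g.k03 s| ≤ g.RmNorm s := by
  unfold RmNorm
  linarith [abs_nonneg (g.k12 s), abs_nonneg (g.k13 s), abs_nonneg (g.k01 s)]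

theorem abs_deriv_deriv_b_le (hs : 0 < s) (hα : g.RmNorm s ≤ α) :
    |deriv (deriv g.b) s| ≤ α * |g.b s| := by
  have hk : |g.k01 s| ≤ α := abs_k01_le_RmNorm.trans hα
  rwa [k01, abs_div, abs_neg, div_le_iff₀ (abs_pos.2 (g.b_pos s hs).ne')] at hk

theorem abs_deriv_deriv_c_le (hs : 0 < s) (hα : g.RmNorm s ≤ α) :
    |deriv (deriv g.c) s| ≤ α * |g.c s| := by
  have hk : |g.k03 s| ≤ α := abs_k03_le_RmNorm.trans hα
  rwa [k03, abs_div, abs_neg, div_le_iff₀ (abs_pos.2 (g.c_pos s hs).ne')] at hk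

end WarpedBergerMetric

theorem warpedBerger_derivatives_exponentially_bounded_general
    {E F : Type*} [NormedAddCommGroup E] [NormedSpace ℝ E] [NormedAddCommGroup F]
    [NormedSpace ℝ F] {b : ℝ → E} {c : ℝ → F} {α : ℝ}
    (hb : DifferentiableOn ℝ b (Ioi 0)) (hb' : DifferentiableOn ℝ (deriv b) (Ioi 0))
    (hc : DifferentiableOn ℝ c (Ioi 0)) (hc' : DifferentiableOn ℝ (deriv c) (Ioi 0))
    (hbα : ∀ s > 0, ‖deriv (deriv b) s‖ ≤ α * ‖b s‖)
    (hcα : ∀ s > 0, ‖deriv (deriv c) s‖ ≤ α * ‖c s‖) :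
    ∃ M > 0, ∃ β > 0, ∀ s > 0, ‖deriv c s‖ + ‖deriv b s‖ ≤ M * Real.exp (β * s) := by
  set B := max ‖b 1‖ ‖deriv b 1‖
  set C := max ‖c 1‖ ‖deriv c 1‖
  set β := max 1 α
  refine ⟨(C + B + 1) * Real.exp β, by positivity, β, by positivity, fun s hs => ?_⟩
  calc ‖deriv c s‖ + ‖deriv b s‖
      ≤ C * Real.exp (β * (s + 1)) + B * Real.exp (β * (s + 1)) :=
        add_le_add (norm_deriv_le_mul_exp_of_norm_deriv2_le hc hc' hcα hs)
          (norm_deriv_le_mul_exp_of_norm_deriv2_le hb hb' hbα hs)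
    _ = (C + B) * Real.exp (β * (s + 1)) := (add_mul _ _ _).symm
    _ ≤ (C + B + 1) * Real.exp (β * (s + 1)) :=
      mul_le_mul_of_nonneg_right (lt_add_one _).le (Real.exp_nonneg _)
    _ = (C + B + 1) * Real.exp β * Real.exp (β * s) := by
      rw [mul_add_one, Real.exp_add, mul_assoc, mul_comm (Real.exp β)]

/-- there exist `M > 0` and `α > 0` with
`|c_s(s)| + |b_s(s)| ≤ M exp(α s)` for all `s > 0`. -/
theorem warpedBerger_derivatives_exponentially_bounded (g : WarpedBergerMetric)
    (hBC : g.BoundedCurvature) :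
    ∃ M > 0, ∃ α > 0, ∀ s > 0,
      |deriv g.c s| + |deriv g.b s| ≤ M * Real.exp (α * s) := by
  obtain ⟨α, -, hα⟩ := hBC
  obtain ⟨hb, hb'⟩ := (contDiffOn_infty_iff_deriv_of_isOpen isOpen_Ioi).1 g.smooth_b
  obtain ⟨hc, hc'⟩ := (contDiffOn_infty_iff_deriv_of_isOpen isOpen_Ioi).1 g.smooth_c
  exact warpedBerger_derivatives_exponentially_bounded_general
    hb (hb'.differentiableOn (by simp)) hc (hc'.differentiableOn (by simp))
    (fun s hs => WarpedBergerMetric.abs_deriv_deriv_b_le hs (hα s hs))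
    (fun s hs => WarpedBergerMetric.abs_deriv_deriv_c_le hs (hα s hs))
end
end

section
/- Let (ℝ⁴, g(t)) for t ∈ [0,T) be a warped Berger Ricci flow with bounded curvature starting at g₀ ∈ 𝒢. Then sup_x b(x,t) ≤ sup_x b(x,0) for every t ∈ [0,T); moreover T ≤ (sup_x b²(x,0))/4. -/
open Set Filter Topology MeasureTheory

noncomputable section

/-- Spatial derivative with respect to arclength: `f_s = ξ⁻¹ ∂ₓ f`. -/
def dS (ξ f : ℝ → ℝ → ℝ) (x t : ℝ) : ℝ := (ξ x t)⁻¹ * deriv (fun y => f y t) x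

/-- A warped Berger Ricci flow on `ℝ⁴` over `[0,T)`, described by smooth positive radial
functions `ξ, b, c` of the radial coordinate `x ∈ (0,∞)` and time `t ∈ [0,T)`,
satisfying the Ricci flow equations, completeness, the smoothness boundary conditions
at the origin of `ℝ⁴`, and the Berger ordering `c ≤ b` at `t = 0`. -/
structure WarpedBergerFlow where
  T : ℝ
  T_pos : 0 < T
  ξ : ℝ → ℝ → ℝ
  b : ℝ → ℝ → ℝ
  c : ℝ → ℝ → ℝ
  smooth_ξ : ContDiffOn ℝ (⊤ : ℕ∞) (fun p : ℝ × ℝ => ξ p.1 p.2) (Ioi 0 ×ˢ Ico 0 T)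
  smooth_b : ContDiffOn ℝ (⊤ : ℕ∞) (fun p : ℝ × ℝ => b p.1 p.2) (Ioi 0 ×ˢ Ico 0 T)
  smooth_c : ContDiffOn ℝ (⊤ : ℕ∞) (fun p : ℝ × ℝ => c p.1 p.2) (Ioi 0 ×ˢ Ico 0 T)
  ξ_pos : ∀ x > 0, ∀ t ∈ Ico (0:ℝ) T, 0 < ξ x t
  b_pos : ∀ x > 0, ∀ t ∈ Ico (0:ℝ) T, 0 < b x t
  c_pos : ∀ x > 0, ∀ t ∈ Ico (0:ℝ) T, 0 < c x t
  /-- Ricci flow equation for `b`: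
  `b_t = b_ss + (c_s/c + b_s/b) b_s + 2(c² − 2b²)/b³`. -/
  eq_b : ∀ x > 0, ∀ t ∈ Ico (0:ℝ) T,
    deriv (fun u => b x u) t =
      dS ξ (dS ξ b) x t + (dS ξ c x t / c x t + dS ξ b x t / b x t) * dS ξ b x t
        + 2 * ((c x t) ^ 2 - 2 * (b x t) ^ 2) / (b x t) ^ 3
  /-- Ricci flow equation for `c`: `c_t = c_ss + 2 (b_s/b) c_s − 2c³/b⁴`. -/
  eq_c : ∀ x > 0, ∀ t ∈ Ico (0:ℝ) T,
    deriv (fun u => c x u) t =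
      dS ξ (dS ξ c) x t + 2 * (dS ξ b x t / b x t) * dS ξ c x t
        - 2 * (c x t) ^ 3 / (b x t) ^ 4
  /-- Ricci flow equation for `ξ`: `ξ_t = −ξ (2 b_ss/b + c_ss/c)`. -/
  eq_ξ : ∀ x > 0, ∀ t ∈ Ico (0:ℝ) T,
    deriv (fun u => ξ x u) t =
      -(ξ x t) * (2 * dS ξ (dS ξ b) x t / b x t + dS ξ (dS ξ c) x t / c x t)
  /-- Completeness: the arclength `s(x,t) = ∫₀ˣ ξ(y,t) dy` tends to `∞` as `x → ∞`. -/
  complete : ∀ t ∈ Ico (0:ℝ) T,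
    Tendsto (fun x => ∫ y in (0:ℝ)..x, ξ y t) atTop atTop
  /-- Smoothness at the origin: `b → 0` as `x → 0⁺`. -/
  b_origin : ∀ t ∈ Ico (0:ℝ) T, Tendsto (fun x => b x t) (𝓝[>] 0) (𝓝 0)
  c_origin : ∀ t ∈ Ico (0:ℝ) T, Tendsto (fun x => c x t) (𝓝[>] 0) (𝓝 0)
  /-- Smoothness at the origin: `b_s → 1` as `x → 0⁺`. -/
  bs_origin : ∀ t ∈ Ico (0:ℝ) T, Tendsto (fun x => dS ξ b x t) (𝓝[>] 0) (𝓝 1)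
  cs_origin : ∀ t ∈ Ico (0:ℝ) T, Tendsto (fun x => dS ξ c x t) (𝓝[>] 0) (𝓝 1)
  /-- The Berger ordering `c ≤ b` holds at `t = 0`. -/
  ordered_init : ∀ x > 0, c x 0 ≤ b x 0

namespace WarpedBergerFlow

variable (F : WarpedBergerFlow)

/-- `b_s`. -/
def bS : ℝ → ℝ → ℝ := dS F.ξ F.b
/-- `c_s`. -/
def cS : ℝ → ℝ → ℝ := dS F.ξ F.c
/-- `b_ss`. -/
def bSS : ℝ → ℝ → ℝ := dS F.ξ (dS F.ξ F.b)
/-- `c_ss`. -/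
def cSS : ℝ → ℝ → ℝ := dS F.ξ (dS F.ξ F.c)

/-- Sectional curvature `k12 = (4b² − 3c²)/b⁴ − b_s²/b²`. -/
def k12 (x t : ℝ) : ℝ :=
  (4 * (F.b x t) ^ 2 - 3 * (F.c x t) ^ 2) / (F.b x t) ^ 4 - (F.bS x t) ^ 2 / (F.b x t) ^ 2
/-- Sectional curvature `k13 = c²/b⁴ − b_s c_s/(b c)`. -/
def k13 (x t : ℝ) : ℝ :=
  (F.c x t) ^ 2 / (F.b x t) ^ 4 - F.bS x t * F.cS x t / (F.b x t * F.c x t)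
/-- Sectional curvature `k01 = −b_ss/b`. -/
def k01 (x t : ℝ) : ℝ := -(F.bSS x t) / F.b x t
/-- Sectional curvature `k03 = −c_ss/c`. -/
def k03 (x t : ℝ) : ℝ := -(F.cSS x t) / F.c x t
/-- `|Rm| = |k12| + |k13| + |k01| + |k03|`. -/
def RmNorm (x t : ℝ) : ℝ := |F.k12 x t| + |F.k13 x t| + |F.k01 x t| + |F.k03 x t|
/-- Mean curvature of the Euclidean hypersphere of radius `x`: `H = 2 b_s/b + c_s/c`. -/
def meanH (x t : ℝ) : ℝ := 2 * F.bS x t / F.b x t + F.cS x t / F.c x t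

/-- Bounded curvature: `|Rm|` is bounded on `(0,∞) × [0,t₀]` for every `t₀ < T`. -/
def BoundedCurvature : Prop :=
  ∀ t₀ ∈ Ico (0:ℝ) F.T, ∃ C : ℝ, ∀ x > 0, ∀ t ∈ Icc (0:ℝ) t₀, F.RmNorm x t ≤ C

/-- The initial metric belongs to the class `𝒢`: at `t = 0`, `b_s ≥ 0` and `H ≥ 0`
everywhere, `b(·,0)` is bounded, and `|Rm|(·,0)` is bounded. -/
def InG : Prop :=
  (∀ x > 0, 0 ≤ F.bS x 0) ∧ (∀ x > 0, 0 ≤ F.meanH x 0) ∧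
  (∃ M : ℝ, ∀ x > 0, F.b x 0 ≤ M) ∧ (∃ C : ℝ, ∀ x > 0, F.RmNorm x 0 ≤ C)

end WarpedBergerFlow

open scoped NNReal

/-!
On `(0,∞) × [0,t₀]` with `t₀ < T`, bounded curvature yields a maximum principle for the operator
`f ↦ f_ss + H f_s`. Its barrier is the cube of the arclength from the sphere `x = 1`, weighted by
`e^{Ct}` and cut off at zero inside that sphere, so that only an upper bound for `H` on `x ≥ 1`
enters; this bound comes from the Riccati inequality for `H`. Where positive, `log (c/b)` is a
subsolution of `f_t = f_ss + H f_s`, so the ordering `c ≤ b` persists. Given the ordering, the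
reaction term in the equation for `b² + 4t` has a sign and `b² + 4t` is a subsolution too. Hence
`b(x,t)² ≤ sup b(·,0)² - 4t`, which fails once `4t` reaches `sup b(·,0)²`.
-/

/-! ### One-variable calculus -/

theorem deriv_nonneg_of_isLocalMaxOn_Iic {ψ : ℝ → ℝ} {d t : ℝ} (hmax : IsLocalMaxOn ψ (Iic t) t)
    (hψ : HasDerivWithinAt ψ d (Iic t) t) : 0 ≤ d := by
  have hcone : (-1 : ℝ) ∈ posTangentConeAt (Iic t) t :=
    mem_posTangentConeAt_of_segment_subset <|
      (convex_Iic t).segment_subset self_mem_Iic (by simp : t + -1 ≤ t)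
  simpa using hmax.hasFDerivWithinAt_nonpos hψ.hasFDerivWithinAt hcone

/-- Second derivative test when `h' = w q` and only the factor `q` is known to be differentiable
at the maximum. -/
theorem nonpos_of_isLocalMax_of_hasDerivAt_mul {h w q : ℝ → ℝ} {x d : ℝ} (hmax : IsLocalMax h x)
    (hh : ∀ᶠ y in 𝓝 x, HasDerivAt h (w y * q y) y) (hw : ∀ᶠ y in 𝓝 x, 0 < w y)
    (hq : HasDerivAt q d x) : d ≤ 0 := by
  by_contra! hd
  have hqx : q x = 0 :=
    (mul_eq_zero.1 (hmax.hasDerivAt_eq_zero hh.self_of_nhds)).resolve_left hw.self_of_nhds.ne'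
  have hsign : ∀ᶠ y in 𝓝 x, SignType.sign (deriv h y) = SignType.sign (y - x) := by
    filter_upwards [hh, hw, eventually_nhdsWithin_sign_eq_of_deriv_pos (hq.deriv ▸ hd) hqx]
      with y hhy hwy hqy
    rw [hhy.deriv, sign_mul, sign_pos hwy, one_mul, hqy]
  have hmin : IsLocalMin h x :=
    isLocalMin_of_sign_deriv hh.self_of_nhds.continuousAt (hsign.filter_mono nhdsWithin_le_nhds)
  have hconst : h =ᶠ[𝓝 x] fun _ => h x := by
    filter_upwards [hmax, hmin] with y h₁ h₂ using le_antisymm h₁ h₂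
  have hqzero : q =ᶠ[𝓝 x] fun _ => 0 := by
    filter_upwards [hconst.eventuallyEq_nhds, hh, hw] with y hy hhy hwy
    exact (mul_eq_zero.1 (hhy.unique ((hasDerivAt_const y (h x)).congr_of_eventuallyEq hy)))
      |>.resolve_left hwy.ne'
  exact hd.ne' (hq.unique ((hasDerivAt_const x 0).congr_of_eventuallyEq hqzero))

theorem hasDerivAt_max_zero_pow (n : ℕ) (r : ℝ) :
    HasDerivAt (fun u => max u 0 ^ (n + 2)) ((n + 2) * max r 0 ^ (n + 1)) r := by
  have hpow : HasDerivAt (fun u : ℝ => u ^ (n + 2)) ((n + 2) * r ^ (n + 1)) r := by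
    simpa using hasDerivAt_pow (n + 2) r
  rcases lt_trichotomy r 0 with hr | rfl | hr
  · have heq : (fun u : ℝ => max u 0 ^ (n + 2)) =ᶠ[𝓝 r] fun _ => 0 := by
      filter_upwards [Iio_mem_nhds hr] with u (hu : u < 0)
      simp [max_eq_right hu.le]
    simpa [max_eq_right hr.le] using (hasDerivAt_const r (0 : ℝ)).congr_of_eventuallyEq heq
  · have hpow₀ : HasDerivWithinAt (fun u : ℝ => u ^ (n + 2)) 0 (Ici 0) 0 := by
      simpa using hpow.hasDerivWithinAt
    have hneg : HasDerivWithinAt (fun u : ℝ => max u 0 ^ (n + 2)) 0 (Iic 0) 0 :=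
      (hasDerivWithinAt_const 0 _ (0 : ℝ)).congr
        (fun u (hu : u ≤ 0) => by simp [max_eq_right hu]) (by simp)
    have hpos : HasDerivWithinAt (fun u : ℝ => max u 0 ^ (n + 2)) 0 (Ici 0) 0 :=
      hpow₀.congr (fun u (hu : 0 ≤ u) => by simp [max_eq_left hu]) (by simp)
    simpa using hneg.union hpos
  · have heq : (fun u : ℝ => max u 0 ^ (n + 2)) =ᶠ[𝓝 r] fun u => u ^ (n + 2) := by
      filter_upwards [Ioi_mem_nhds hr] with u (hu : 0 < u)
      rw [max_eq_left hu.le]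
    simpa [max_eq_left hr.le] using hpow.congr_of_eventuallyEq heq

theorem lipschitzOnWith_of_abs_deriv_interior_le {D : Set ℝ} (hD : Convex ℝ D) {g g' : ℝ → ℝ}
    {L : ℝ≥0} (hg : ContinuousOn g D) (hderiv : ∀ t ∈ interior D, HasDerivAt g (g' t) t)
    (hL : ∀ t ∈ interior D, |g' t| ≤ L) : LipschitzOnWith L g D := by
  have hdiff : DifferentiableOn ℝ g (interior D) := fun t ht =>
    (hderiv t ht).differentiableAt.differentiableWithinAt
  have hmvt : ∀ s ∈ D, ∀ t ∈ D, s ≤ t → dist (g s) (g t) ≤ L * dist s t := by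
    intro s hs t ht hst
    have hub := hD.image_sub_le_mul_sub_of_deriv_le hg hdiff
      (fun u hu => (hderiv u hu).deriv.trans_le (abs_le.1 (hL u hu)).2) s hs t ht hst
    have hlb := hD.mul_sub_le_image_sub_of_le_deriv hg hdiff
      (fun u hu => (abs_le.1 (hL u hu)).1.trans_eq (hderiv u hu).deriv.symm) s hs t ht hst
    rw [dist_comm (g s), dist_comm s, Real.dist_eq, Real.dist_eq, abs_of_nonneg (sub_nonneg.2 hst)]
    exact abs_le.2 ⟨by linarith, hub⟩
  refine LipschitzOnWith.of_dist_le_mul fun s hs t ht => ?_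
  rcases le_total s t with hst | hts
  · exact hmvt s hs t ht hst
  · simpa only [dist_comm] using hmvt t ht s hs hts

theorem tendsto_intervalIntegral_atTop_of_le {f : ℝ → ℝ} {a b : ℝ} (hab : a ≤ b)
    (h : Tendsto (fun x => ∫ y in a..x, f y) atTop atTop) :
    Tendsto (fun x => ∫ y in b..x, f y) atTop atTop := by
  refine (tendsto_atTop_add_const_right _ (-∫ y in a..b, f y) h).congr' ?_
  filter_upwards [h.eventually_ne_atTop 0, eventually_ge_atTop b] with x hne hbx
  have hint : IntervalIntegrable f volume a x :=
    intervalIntegral.intervalIntegrable_of_integral_ne_zero hne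
  have hmem : b ∈ uIcc a x := mem_uIcc_of_le hab hbx
  rw [← intervalIntegral.integral_add_adjacent_intervals
    (hint.mono_set (uIcc_subset_uIcc_left hmem)) (hint.mono_set (uIcc_subset_uIcc_right hmem))]
  ring

theorem hasDerivAt_primitive_of_continuousOn_Ioi {E : Type*} [NormedAddCommGroup E]
    [NormedSpace ℝ E] [CompleteSpace E] {f : ℝ → E} {l a x : ℝ}
    (hf : ContinuousOn f (Ioi l)) (ha : l < a) (hx : l < x) :
    HasDerivAt (fun z => ∫ y in a..z, f y) (f x) x :=
  intervalIntegral.integral_hasDerivAt_right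
    (hf.mono fun _ hy => (lt_inf_iff.2 ⟨ha, hx⟩).trans_le hy.1).intervalIntegrable
    (hf.stronglyMeasurableAtFilter isOpen_Ioi x hx) (hf.continuousAt (Ioi_mem_nhds hx))

theorem continuousOn_primitive_of_continuousOn_Ioi_prod {X E : Type*} [TopologicalSpace X]
    [NormedAddCommGroup E] [NormedSpace ℝ E] {J : Set X} {ζ : ℝ → X → E} {l a : ℝ} (ha : l < a)
    (hζ : ContinuousOn (fun p : ℝ × X => ζ p.1 p.2) (Ioi l ×ˢ J)) :
    ContinuousOn (fun p : ℝ × X => ∫ y in a..p.1, ζ y p.2) (Ioi l ×ˢ J) := by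
  rintro ⟨x, t⟩ ⟨hx, ht⟩
  obtain ⟨m, hlm, hm⟩ := exists_between (lt_min ha hx)
  obtain ⟨hma, hmx⟩ := lt_min_iff.1 hm
  -- Cutting `ζ` off to the left of `m` makes it continuous on all of `J × ℝ`.
  have hcut : Continuous (Function.uncurry fun (τ : J) y => ζ (max y m) τ) :=
    hζ.comp_continuous (f := fun p : J × ℝ => (max p.2 m, (p.1 : X))) (by fun_prop)
      fun p => ⟨hlm.trans_le (le_max_right _ _), p.1.2⟩
  have hprim := intervalIntegral.continuous_parametric_primitive_of_continuous
    (μ := volume) (a₀ := a) hcut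
  have hrestrict : ContinuousOn (fun p : ℝ × X => ∫ y in a..p.1, ζ (max y m) p.2) (univ ×ˢ J) := by
    rw [continuousOn_iff_continuous_domRestrict]
    exact hprim.comp (f := fun p : (univ : Set ℝ) ×ˢ J => ((⟨p.1.2, p.2.2⟩ : J), p.1.1))
      (by fun_prop)
  have heq : ∀ p ∈ Ioi m ×ˢ J, ∫ y in a..p.1, ζ (max y m) p.2 = ∫ y in a..p.1, ζ y p.2 :=
    fun p hp => intervalIntegral.integral_congr fun y hy => by
      rw [max_eq_left ((lt_min hma hp.1).le.trans hy.1)]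
  have hnhds : Ioi m ×ˢ J ∈ 𝓝[Ioi l ×ˢ J] (x, t) := by
    rw [nhdsWithin_prod_eq]
    exact prod_mem_prod (mem_nhdsWithin_of_mem_nhds (Ioi_mem_nhds hmx)) self_mem_nhdsWithin
  refine ContinuousWithinAt.mono_of_mem_nhdsWithin ?_ hnhds
  exact ((hrestrict.mono (prod_mono_left (subset_univ _))).congr fun p hp => (heq p hp).symm)
    (x, t) ⟨hmx, ht⟩

theorem le_exp_mul_of_lipschitzOnWith_log {X : Type*} [PseudoMetricSpace X] {f : X → ℝ} {s : Set X}
    {L : ℝ≥0} (hf : ∀ x ∈ s, 0 < f x) (hL : LipschitzOnWith L (fun x => Real.log (f x)) s) {x y : X}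
    (hx : x ∈ s) (hy : y ∈ s) : f y ≤ Real.exp (L * dist y x) * f x := by
  have hlog : Real.log (f y) - Real.log (f x) ≤ L * dist y x :=
    (le_abs_self _).trans (hL.dist_le_mul y hy x hx)
  rw [← Real.exp_log (hf y hy), ← Real.exp_log (hf x hx), ← Real.exp_add]
  exact Real.exp_le_exp.2 (sub_le_iff_le_add.1 (by simpa using hlog))

theorem monotoneOn_exp_mul_of_lipschitzOnWith_log {f : ℝ → ℝ} {s : Set ℝ} {L : ℝ≥0}
    (hf : ∀ t ∈ s, 0 < f t) (hL : LipschitzOnWith L (fun t => Real.log (f t)) s) :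
    MonotoneOn (fun t => Real.exp (L * t) * f t) s := by
  intro t ht u hu htu
  have hle := le_exp_mul_of_lipschitzOnWith_log hf hL hu ht
  rw [dist_comm, Real.dist_eq, abs_of_nonneg (sub_nonneg.2 htu)] at hle
  calc Real.exp (L * t) * f t ≤ Real.exp (L * t) * (Real.exp (L * (u - t)) * f u) := by gcongr
    _ = Real.exp (L * u) * f u := by rw [← mul_assoc, ← Real.exp_add]; ring_nf

/-! ### Compactness -/

theorem exists_isMaxOn_of_le_off_compact {X α : Type*} [TopologicalSpace X] [LinearOrder α]
    [TopologicalSpace α] [ClosedIciTopology α] {K s : Set X} {f : X → α} {x₀ : X}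
    (hK : IsCompact K) (hKs : K ⊆ s) (hf : ContinuousOn f s) (hx₀ : x₀ ∈ s)
    (hle : ∀ x ∈ s \ K, f x ≤ f x₀) : ∃ x ∈ s, IsMaxOn f s x := by
  have hsub : insert x₀ K ⊆ s := insert_subset hx₀ hKs
  obtain ⟨x, hx, hmax⟩ := (hK.insert x₀).exists_isMaxOn (insert_nonempty x₀ K) (hf.mono hsub)
  refine ⟨x, hsub hx, fun y hy => ?_⟩
  by_cases hyK : y ∈ K
  · exact hmax (mem_insert_of_mem x₀ hyK)
  · exact (hle y ⟨hy, hyK⟩).trans (hmax (mem_insert x₀ K))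

theorem tendstoUniformlyOn_of_lipschitzOnWith {ι X Y : Type*} [PseudoEMetricSpace X]
    [PseudoEMetricSpace Y] {K : Set X} (hK : IsCompact K) {l : Filter ι} {F : ι → X → Y} {f : X → Y}
    {L : ℝ≥0} (hF : ∀ i, LipschitzOnWith L (F i) K)
    (hlim : ∀ x ∈ K, Tendsto (F · x) l (𝓝 (f x))) : TendstoUniformlyOn F f l K := by
  have hequi := (LipschitzOnWith.uniformEquicontinuousOn F L hF).equicontinuousOn
  refine UniformOnFun.tendsto_iff_tendstoUniformlyOn.1
    ((EquicontinuousOn.tendsto_uniformOnFun_iff_pi' (𝔖 := {K}) (by simpa) (by simpa) l f).2 ?_)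
    K rfl
  rw [tendsto_pi_nhds]
  rintro ⟨x, hx⟩
  exact hlim x (by simpa using hx)

/-! ### Arclength derivatives -/

/-- At times `t ∈ I` the functions `f₁` and `f₂` are the first two derivatives of `f` with respect
to the arclength `ds = ξ dx`. -/
def HasArclengthDerivs (ξ f f₁ f₂ : ℝ → ℝ → ℝ) (I : Set ℝ) : Prop :=
  ∀ x > 0, ∀ t ∈ I, HasDerivAt (f · t) (ξ x t * f₁ x t) x ∧ HasDerivAt (f₁ · t) (ξ x t * f₂ x t) x

namespace HasArclengthDerivs

variable {ξ f f₁ f₂ g g₁ g₂ : ℝ → ℝ → ℝ} {I : Set ℝ}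

theorem mono {J : Set ℝ} (hf : HasArclengthDerivs ξ f f₁ f₂ I) (hJ : J ⊆ I) :
    HasArclengthDerivs ξ f f₁ f₂ J := fun x hx t ht => hf x hx t (hJ ht)

theorem sub (hf : HasArclengthDerivs ξ f f₁ f₂ I) (hg : HasArclengthDerivs ξ g g₁ g₂ I) :
    HasArclengthDerivs ξ (fun x t => f x t - g x t) (fun x t => f₁ x t - g₁ x t)
      (fun x t => f₂ x t - g₂ x t) I := fun x hx t ht =>
  ⟨((hf x hx t ht).1.sub (hg x hx t ht).1).congr_deriv (mul_sub ..).symm,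
    ((hf x hx t ht).2.sub (hg x hx t ht).2).congr_deriv (mul_sub ..).symm⟩

theorem add_time (hf : HasArclengthDerivs ξ f f₁ f₂ I) (φ : ℝ → ℝ) :
    HasArclengthDerivs ξ (fun x t => f x t + φ t) f₁ f₂ I := fun x hx t ht =>
  ⟨(hf x hx t ht).1.add_const (φ t), (hf x hx t ht).2⟩

theorem time_mul (hf : HasArclengthDerivs ξ f f₁ f₂ I) (φ : ℝ → ℝ) :
    HasArclengthDerivs ξ (fun x t => φ t * f x t) (fun x t => φ t * f₁ x t)
      (fun x t => φ t * f₂ x t) I := fun x hx t ht =>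
  ⟨((hf x hx t ht).1.const_mul (φ t)).congr_deriv (mul_left_comm ..),
    ((hf x hx t ht).2.const_mul (φ t)).congr_deriv (mul_left_comm ..)⟩

theorem comp (hf : HasArclengthDerivs ξ f f₁ f₂ I) {φ φ₁ φ₂ : ℝ → ℝ}
    (hφ : ∀ x > 0, ∀ t ∈ I, HasDerivAt φ (φ₁ (f x t)) (f x t))
    (hφ₁ : ∀ x > 0, ∀ t ∈ I, HasDerivAt φ₁ (φ₂ (f x t)) (f x t)) :
    HasArclengthDerivs ξ (fun x t => φ (f x t)) (fun x t => φ₁ (f x t) * f₁ x t)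
      (fun x t => φ₂ (f x t) * f₁ x t ^ 2 + φ₁ (f x t) * f₂ x t) I := by
  intro x hx t ht
  obtain ⟨hfx, hf₁x⟩ := hf x hx t ht
  exact ⟨((hφ x hx t ht).comp x hfx).congr_deriv (by ring),
    (((hφ₁ x hx t ht).comp x hfx).mul hf₁x).congr_deriv (by simp only [Function.comp_apply]; ring)⟩

theorem log (hf : HasArclengthDerivs ξ f f₁ f₂ I) (hne : ∀ x > 0, ∀ t ∈ I, f x t ≠ 0) :
    HasArclengthDerivs ξ (fun x t => Real.log (f x t)) (fun x t => f₁ x t / f x t)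
      (fun x t => f₂ x t / f x t - (f₁ x t / f x t) ^ 2) I := by
  convert hf.comp (φ := Real.log) (φ₁ := fun y => y⁻¹) (φ₂ := fun y => -(y ^ 2)⁻¹)
    (fun x hx t ht => Real.hasDerivAt_log (hne x hx t ht))
    (fun x hx t ht => hasDerivAt_inv (hne x hx t ht)) using 3 <;> ring

theorem eq_zero_and_nonpos_of_isLocalMax (hf : HasArclengthDerivs ξ f f₁ f₂ I)
    (hξ : ∀ x > 0, ∀ t ∈ I, 0 < ξ x t) {x t : ℝ} (hx : 0 < x) (ht : t ∈ I)
    (hmax : IsLocalMax (f · t) x) : f₁ x t = 0 ∧ f₂ x t ≤ 0 := by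
  obtain ⟨hfx, hf₁x⟩ := hf x hx t ht
  have hξx := hξ x hx t ht
  have hev : ∀ᶠ y in 𝓝 x, 0 < y := lt_mem_nhds hx
  refine ⟨(mul_eq_zero.1 (hmax.hasDerivAt_eq_zero hfx)).resolve_left hξx.ne', ?_⟩
  have hle : ξ x t * f₂ x t ≤ 0 := nonpos_of_isLocalMax_of_hasDerivAt_mul hmax
    (hev.mono fun y hy => (hf y hy t ht).1) (hev.mono fun y hy => hξ y hy t ht) hf₁x
  exact nonpos_of_mul_nonpos_right hle hξx

end HasArclengthDerivs

/-! ### A maximum principle on the half-line -/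

/-- `f` is a subsolution of `f_t = f_ss + H f_s` on `(0,∞) × (0,t₀]` wherever it is positive; the
functions `f₁`, `f₂`, `fₜ` are its derivatives `f_s`, `f_ss`, `f_t`. -/
structure IsSubsolution (ξ H : ℝ → ℝ → ℝ) (t₀ : ℝ) (f f₁ f₂ fₜ : ℝ → ℝ → ℝ) : Prop where
  continuousOn : ContinuousOn (fun p : ℝ × ℝ => f p.1 p.2) (Ioi 0 ×ˢ Icc 0 t₀)
  arclength : HasArclengthDerivs ξ f f₁ f₂ (Ioc 0 t₀)
  hasDerivAt_time : ∀ x > 0, ∀ t ∈ Ioc 0 t₀, HasDerivAt (f x) (fₜ x t) t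
  le : ∀ x > 0, ∀ t ∈ Ioc 0 t₀, 0 < f x t → fₜ x t ≤ f₂ x t + H x t * f₁ x t

/-- `ρ` is an exhaustion of the end `x → ∞`, nondecreasing in time, for which `e^{At} ρ` is a strict
supersolution of `f_t = f_ss + H f_s`; the functions `ρ₁`, `ρ₂` are `ρ_s`, `ρ_ss`. -/
structure IsBarrier (ξ H : ℝ → ℝ → ℝ) (t₀ A : ℝ) (ρ ρ₁ ρ₂ : ℝ → ℝ → ℝ) : Prop where
  rate_nonneg : 0 ≤ A
  continuousOn : ContinuousOn (fun p : ℝ × ℝ => ρ p.1 p.2) (Ioi 0 ×ˢ Icc 0 t₀)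
  arclength : HasArclengthDerivs ξ ρ ρ₁ ρ₂ (Ioc 0 t₀)
  one_le : ∀ x > 0, ∀ t ∈ Icc 0 t₀, 1 ≤ ρ x t
  monotoneOn : ∀ x > 0, MonotoneOn (ρ x) (Icc 0 t₀)
  exhaustion : ∀ R, ∀ᶠ x in atTop, ∀ t ∈ Icc 0 t₀, R ≤ ρ x t
  lt : ∀ x > 0, ∀ t ∈ Ioc 0 t₀, ρ₂ x t + H x t * ρ₁ x t < A * ρ x t

section MaximumPrinciple

variable {ξ H f f₁ f₂ fₜ ρ ρ₁ ρ₂ : ℝ → ℝ → ℝ} {t₀ A : ℝ}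

theorem IsSubsolution.mul_le_of_isMaxOn (hf : IsSubsolution ξ H t₀ f f₁ f₂ fₜ) {x t : ℝ}
    (hx : 0 < x) (ht : t ∈ Ioc 0 t₀)
    (hmax : IsMaxOn (fun u => Real.exp (-A * u) * f x u) (Icc 0 t) t) :
    A * f x t ≤ fₜ x t := by
  have hexp : HasDerivAt (fun u => Real.exp (-A * u)) (Real.exp (-A * t) * -A) t := by
    simpa using ((hasDerivAt_id t).const_mul (-A)).exp
  have hnonneg := deriv_nonneg_of_isLocalMaxOn_Iic
    (hmax.filter_mono (le_principal_iff.2 (Icc_mem_nhdsLE ht.1)))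
    (hexp.mul (hf.hasDerivAt_time x hx t ht)).hasDerivWithinAt
  have hfactor : 0 ≤ Real.exp (-A * t) * (fₜ x t - A * f x t) := hnonneg.trans_eq (by ring)
  linarith [nonneg_of_mul_nonneg_right hfactor (Real.exp_pos _)]

/-- At such a maximum `f_s`, `f_ss` and `f_t` compare with those of a multiple of `e^{At} ρ`, which
is a strict supersolution. -/
theorem IsBarrier.not_isMaxOn (hρ : IsBarrier ξ H t₀ A ρ ρ₁ ρ₂)
    (hf : IsSubsolution ξ H t₀ f f₁ f₂ fₜ) (hξ : ∀ x > 0, ∀ t ∈ Ioc 0 t₀, 0 < ξ x t)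
    {ε x t : ℝ} (hε : 0 < ε) (hx : 0 < x) (ht : t ∈ Ioc 0 t₀)
    (hpos : ε * ρ x t < Real.exp (-A * t) * f x t) :
    ¬ IsMaxOn (fun p : ℝ × ℝ => Real.exp (-A * p.2) * f p.1 p.2 - ε * ρ p.1 p.2)
      (Ioi 0 ×ˢ Icc 0 t₀) (x, t) := by
  intro hmax
  have htI := Ioc_subset_Icc_self ht
  have hρpos : 0 < ρ x t := one_pos.trans_le (hρ.one_le x hx t htI)
  have hfpos : 0 < f x t :=
    pos_of_mul_pos_right ((mul_pos hε hρpos).trans hpos) (Real.exp_pos _).le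
  obtain ⟨hspace₁, hspace₂⟩ :=
    ((hf.arclength.time_mul fun u => Real.exp (-A * u)).sub
      (hρ.arclength.time_mul fun _ => ε)).eq_zero_and_nonpos_of_isLocalMax hξ hx ht <| by
        filter_upwards [lt_mem_nhds hx] with y hy using isMaxOn_iff.1 hmax (y, t) ⟨hy, htI⟩
  have htime : A * f x t ≤ fₜ x t := hf.mul_le_of_isMaxOn hx ht <| isMaxOn_iff.2 fun u hu => by
    have huI : u ∈ Icc 0 t₀ := ⟨hu.1, hu.2.trans ht.2⟩
    have hu_le := isMaxOn_iff.1 hmax (x, u) ⟨hx, huI⟩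
    have hρ_le := mul_le_mul_of_nonneg_left (hρ.monotoneOn x hx huI htI hu.2) hε.le
    linarith
  have hchain : A * (ε * ρ x t) < A * (ε * ρ x t) := calc
    A * (ε * ρ x t) ≤ A * (Real.exp (-A * t) * f x t) :=
      mul_le_mul_of_nonneg_left hpos.le hρ.rate_nonneg
    _ = Real.exp (-A * t) * (A * f x t) := by ring
    _ ≤ Real.exp (-A * t) * (f₂ x t + H x t * f₁ x t) :=
      mul_le_mul_of_nonneg_left (htime.trans (hf.le x hx t ht hfpos)) (Real.exp_pos _).le
    _ = Real.exp (-A * t) * f₂ x t + H x t * (Real.exp (-A * t) * f₁ x t) := by ring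
    _ ≤ ε * ρ₂ x t + H x t * (ε * ρ₁ x t) := by
      rw [sub_eq_zero.1 hspace₁]
      linarith
    _ = ε * (ρ₂ x t + H x t * ρ₁ x t) := by ring
    _ < ε * (A * ρ x t) := mul_lt_mul_of_pos_left (hρ.lt x hx t ht) hε
    _ = A * (ε * ρ x t) := by ring
  exact hchain.false

theorem IsBarrier.exp_mul_le (hρ : IsBarrier ξ H t₀ A ρ ρ₁ ρ₂) {ε r x t : ℝ} (hx : 0 < x)
    (ht : t ∈ Icc 0 t₀) (hε : 0 ≤ ε) (hr : r ≤ ε * ρ x t) : Real.exp (-A * t) * r ≤ ε * ρ x t := by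
  have hexp : Real.exp (-A * t) ≤ 1 :=
    Real.exp_le_one_iff.2 (mul_nonpos_of_nonpos_of_nonneg (neg_nonpos.2 hρ.rate_nonneg) ht.1)
  have hερ : 0 ≤ ε * ρ x t := mul_nonneg hε (zero_le_one.trans (hρ.one_le x hx t ht))
  calc Real.exp (-A * t) * r ≤ Real.exp (-A * t) * (ε * ρ x t) :=
        mul_le_mul_of_nonneg_left hr (Real.exp_pos _).le
    _ ≤ ε * ρ x t := mul_le_of_le_one_left hερ hexp

theorem IsSubsolution.exp_mul_le_of_isBarrier (hf : IsSubsolution ξ H t₀ f f₁ f₂ fₜ)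
    (hρ : IsBarrier ξ H t₀ A ρ ρ₁ ρ₂) (hξ : ∀ x > 0, ∀ t ∈ Ioc 0 t₀, 0 < ξ x t)
    (hinit : ∀ x > 0, f x 0 ≤ 0) {B : ℝ} (hB : ∀ x > 0, ∀ t ∈ Icc 0 t₀, f x t ≤ B)
    {ε : ℝ} (hε : 0 < ε) (horigin : ∀ᶠ x in 𝓝[>] 0, ∀ t ∈ Icc 0 t₀, f x t ≤ ε) :
    ∀ x > 0, ∀ t ∈ Icc 0 t₀, Real.exp (-A * t) * f x t ≤ ε * ρ x t := by
  intro x₀ hx₀ u₀ hu₀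
  by_contra! hlt
  set h : ℝ × ℝ → ℝ := fun p => Real.exp (-A * p.2) * f p.1 p.2 - ε * ρ p.1 p.2
  have hh₀ : 0 < h (x₀, u₀) := sub_pos.2 hlt
  have h_nonpos {x t : ℝ} (hx : 0 < x) (ht : t ∈ Icc 0 t₀) (hle : f x t ≤ ε * ρ x t) :
      h (x, t) ≤ 0 := sub_nonpos.2 (hρ.exp_mul_le hx ht hε.le hle)
  obtain ⟨a, ha, ha_le⟩ := mem_nhdsGT_iff_exists_Ioo_subset.1 horigin
  obtain ⟨b, hb_le⟩ := eventually_atTop.1 (hρ.exhaustion (B / ε))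
  have hsub : Icc a b ×ˢ Icc 0 t₀ ⊆ Ioi 0 ×ˢ Icc 0 t₀ :=
    prod_mono_left fun x hx => lt_of_lt_of_le ha hx.1
  have hcont : ContinuousOn h (Ioi 0 ×ˢ Icc 0 t₀) := by
    have hf_cont := hf.continuousOn
    have hρ_cont := hρ.continuousOn
    fun_prop
  obtain ⟨⟨x, t⟩, ⟨hx, ht⟩, hmax⟩ := exists_isMaxOn_of_le_off_compact
    (isCompact_Icc.prod isCompact_Icc) hsub hcont (x₀ := (x₀, u₀)) ⟨hx₀, hu₀⟩ <| by
      rintro ⟨x, t⟩ ⟨⟨hx, ht⟩, hnot⟩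
      refine (h_nonpos hx ht ?_).trans hh₀.le
      rcases lt_or_ge x a with hxa | hxa
      · exact (ha_le ⟨hx, hxa⟩ t ht).trans (le_mul_of_one_le_right hε.le (hρ.one_le x hx t ht))
      · have hxb : b ≤ x := le_of_not_ge fun hxb => hnot ⟨⟨hxa, hxb⟩, ht⟩
        exact (hB x hx t ht).trans ((div_le_iff₀' hε).1 (hb_le x hxb t ht))
  have hpos : 0 < h (x, t) := hh₀.trans_le (isMaxOn_iff.1 hmax (x₀, u₀) ⟨hx₀, hu₀⟩)
  have ht_pos : t ≠ 0 := by
    rintro rfl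
    refine hpos.not_ge (h_nonpos hx ht ((hinit x hx).trans ?_))
    exact mul_nonneg hε.le (zero_le_one.trans (hρ.one_le x hx 0 ht))
  exact hρ.not_isMaxOn hf hξ hε hx ⟨ht.1.lt_of_ne' ht_pos, ht.2⟩ (sub_pos.1 hpos) hmax

theorem IsSubsolution.nonpos_of_isBarrier (hf : IsSubsolution ξ H t₀ f f₁ f₂ fₜ)
    (hρ : IsBarrier ξ H t₀ A ρ ρ₁ ρ₂) (hξ : ∀ x > 0, ∀ t ∈ Ioc 0 t₀, 0 < ξ x t)
    (hinit : ∀ x > 0, f x 0 ≤ 0) {B : ℝ} (hB : ∀ x > 0, ∀ t ∈ Icc 0 t₀, f x t ≤ B)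
    (horigin : ∀ ε > 0, ∀ᶠ x in 𝓝[>] 0, ∀ t ∈ Icc 0 t₀, f x t ≤ ε) :
    ∀ x > 0, ∀ t ∈ Icc 0 t₀, f x t ≤ 0 := by
  intro x hx t ht
  have hlim : Tendsto (fun ε => ε * ρ x t) (𝓝[>] 0) (𝓝 0) := by
    have hcont : Continuous fun ε => ε * ρ x t := by fun_prop
    simpa using tendsto_nhdsWithin_of_tendsto_nhds (hcont.tendsto 0)
  have hle : Real.exp (-A * t) * f x t ≤ 0 := ge_of_tendsto hlim <| by
    filter_upwards [self_mem_nhdsWithin] with ε hε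
    exact hf.exp_mul_le_of_isBarrier hρ hξ hinit hB hε (horigin ε hε) x hx t ht
  exact nonpos_of_mul_nonpos_right hle (Real.exp_pos _)

end MaximumPrinciple

/-! ### The cubic barrier -/

/-- The signed arclength from the sphere of radius `1` to the sphere of radius `x`. -/
def arclengthFromOne (ξ : ℝ → ℝ → ℝ) (x t : ℝ) : ℝ := ∫ y in (1 : ℝ)..x, ξ y t

/-- The arclength `∫₁ˣ ξ`, cut off at zero to the left of `x = 1` and weighted by `e^{Ct}`, which
makes it nondecreasing in time when `ξ_t ≥ -C ξ`. -/
def weightedArclength (ξ : ℝ → ℝ → ℝ) (C x t : ℝ) : ℝ :=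
  max (Real.exp (C * t) * arclengthFromOne ξ x t) 0

section Barrier

variable {ξ : ℝ → ℝ → ℝ} {I : Set ℝ}

theorem hasArclengthDerivs_arclengthFromOne (hξ : ∀ t ∈ I, ContinuousOn (ξ · t) (Ioi 0)) :
    HasArclengthDerivs ξ (arclengthFromOne ξ) (fun _ _ => 1) (fun _ _ => 0) I := fun x hx t ht =>
  ⟨(hasDerivAt_primitive_of_continuousOn_Ioi (hξ t ht) one_pos hx).congr_deriv (mul_one _).symm,
    (hasDerivAt_const x 1).congr_deriv (mul_zero _).symm⟩

theorem arclengthFromOne_nonpos {x t : ℝ} (hx : 0 < x) (hx1 : x ≤ 1) (hξ : ∀ y > 0, 0 ≤ ξ y t) :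
    arclengthFromOne ξ x t ≤ 0 := by
  rw [arclengthFromOne, intervalIntegral.integral_symm, neg_nonpos]
  exact intervalIntegral.integral_nonneg hx1 fun y hy => hξ y (hx.trans_le hy.1)

theorem weightedArclength_eq_zero {C x t : ℝ} (hx : 0 < x) (hx1 : x ≤ 1) (hξ : ∀ y > 0, 0 ≤ ξ y t) :
    weightedArclength ξ C x t = 0 :=
  max_eq_right <| mul_nonpos_of_nonneg_of_nonpos (Real.exp_pos _).le <|
    arclengthFromOne_nonpos hx hx1 hξ

theorem monotoneOn_weightedArclength {C x : ℝ} (hx : 0 < x)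
    (hξ_cont : ∀ t ∈ I, ContinuousOn (ξ · t) (Ioi 0)) (hξ : ∀ y > 0, ∀ t ∈ I, 0 ≤ ξ y t)
    (hmono : ∀ y > 0, MonotoneOn (fun t => Real.exp (C * t) * ξ y t) I) :
    MonotoneOn (weightedArclength ξ C x) I := by
  intro t ht u hu htu
  rcases le_total x 1 with hx1 | hx1
  · rw [weightedArclength_eq_zero hx hx1 fun y hy => hξ y hy t ht]
    exact le_max_right _ _
  have hint : ∀ t ∈ I, IntervalIntegrable (fun y => Real.exp (C * t) * ξ y t) volume 1 x :=
    fun t ht => (continuousOn_const.mul ((hξ_cont t ht).mono fun y hy =>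
      one_pos.trans_le ((uIcc_of_le hx1 ▸ hy).1))).intervalIntegrable
  refine max_le_max_right 0 ?_
  simp only [arclengthFromOne, ← intervalIntegral.integral_const_mul]
  exact intervalIntegral.integral_mono_on hx1 (hint t ht) (hint u hu) fun y hy =>
    hmono y (one_pos.trans_le hy.1) ht hu htu

theorem eventually_le_weightedArclength {C t₀ : ℝ}
    (hmono : ∀ x > 0, MonotoneOn (weightedArclength ξ C x) (Icc 0 t₀))
    (hcomplete : Tendsto (arclengthFromOne ξ · 0) atTop atTop) (R : ℝ) :
    ∀ᶠ x in atTop, ∀ t ∈ Icc 0 t₀, R ≤ weightedArclength ξ C x t := by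
  filter_upwards [hcomplete.eventually_ge_atTop R, eventually_gt_atTop 0] with x hRx hx t ht
  calc R ≤ arclengthFromOne ξ x 0 := hRx
    _ ≤ weightedArclength ξ C x 0 := by simp [weightedArclength]
    _ ≤ weightedArclength ξ C x t := hmono x hx ⟨le_rfl, ht.1.trans ht.2⟩ ht ht.1

theorem HasArclengthDerivs.one_add_max_zero_cube {f f₁ f₂ : ℝ → ℝ → ℝ}
    (hf : HasArclengthDerivs ξ f f₁ f₂ I) :
    HasArclengthDerivs ξ (fun x t => 1 + max (f x t) 0 ^ 3)
      (fun x t => 3 * max (f x t) 0 ^ 2 * f₁ x t)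
      (fun x t => 6 * max (f x t) 0 * f₁ x t ^ 2 + 3 * max (f x t) 0 ^ 2 * f₂ x t) I :=
  hf.comp (φ := fun u => 1 + max u 0 ^ 3) (φ₁ := fun u => 3 * max u 0 ^ 2)
    (φ₂ := fun u => 6 * max u 0)
    (fun _ _ _ _ => ((hasDerivAt_max_zero_pow 1 _).congr_deriv (by norm_num)).const_add 1)
    (fun _ _ _ _ => ((hasDerivAt_max_zero_pow 0 _).const_mul 3).congr_deriv (by norm_num; ring))

theorem cubic_barrier_lt {r E E₀ H K : ℝ} (hr : 0 ≤ r) (hE : 0 ≤ E) (hE₀ : E ≤ E₀) (hK : 0 ≤ K)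
    (hH : 0 < r → H ≤ K) :
    6 * r * E ^ 2 + H * (3 * r ^ 2 * E) < (6 * E₀ ^ 2 + 3 * K * E₀ + 1) * (1 + r ^ 3) := by
  have hr₁ : r ≤ 1 + r ^ 3 := by nlinarith [mul_nonneg hr (sq_nonneg (r - 1)), sq_nonneg (r - 1)]
  have hr₂ : r ^ 2 ≤ 1 + r ^ 3 := by
    nlinarith [mul_nonneg hr (sq_nonneg (r - 1)), sq_nonneg (r - 1)]
  have hsecond : 6 * r * E ^ 2 ≤ 6 * E₀ ^ 2 * (1 + r ^ 3) := calc
    6 * r * E ^ 2 ≤ 6 * (1 + r ^ 3) * E₀ ^ 2 := by gcongr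
    _ = 6 * E₀ ^ 2 * (1 + r ^ 3) := by ring
  have hHK : H * (3 * r ^ 2 * E) ≤ K * (3 * r ^ 2 * E) := by
    rcases hr.eq_or_lt with rfl | hr
    · simp
    · exact mul_le_mul_of_nonneg_right (hH hr) (by positivity)
  have hfirst : K * (3 * r ^ 2 * E) ≤ 3 * K * E₀ * (1 + r ^ 3) := calc
    K * (3 * r ^ 2 * E) ≤ K * (3 * (1 + r ^ 3) * E₀) := by gcongr
    _ = 3 * K * E₀ * (1 + r ^ 3) := by ring
  have hr₃ : 0 ≤ r ^ 3 := pow_nonneg hr 3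
  linarith

theorem exists_isBarrier_of_le {H : ℝ → ℝ → ℝ} {t₀ C K : ℝ} (hC : 0 ≤ C) (hK : 0 ≤ K)
    (hξ_cont : ContinuousOn (fun p : ℝ × ℝ => ξ p.1 p.2) (Ioi 0 ×ˢ Icc 0 t₀))
    (hξ : ∀ x > 0, ∀ t ∈ Icc 0 t₀, 0 ≤ ξ x t)
    (hmono : ∀ x > 0, MonotoneOn (fun t => Real.exp (C * t) * ξ x t) (Icc 0 t₀))
    (hcomplete : Tendsto (arclengthFromOne ξ · 0) atTop atTop)
    (hH : ∀ x ≥ 1, ∀ t ∈ Icc 0 t₀, H x t ≤ K) :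
    ∃ A ρ ρ₁ ρ₂, IsBarrier ξ H t₀ A ρ ρ₁ ρ₂ := by
  have hslice : ∀ t ∈ Icc 0 t₀, ContinuousOn (ξ · t) (Ioi 0) := fun t ht =>
    ContinuousOn.uncurry_right t ht hξ_cont
  have hσ_mono : ∀ x > 0, MonotoneOn (weightedArclength ξ C x) (Icc 0 t₀) := fun x hx =>
    monotoneOn_weightedArclength hx hslice hξ hmono
  have hσ_nonneg (x t : ℝ) : 0 ≤ weightedArclength ξ C x t := le_max_right _ _
  have hρ_arclength := (((hasArclengthDerivs_arclengthFromOne hslice).mono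
    Ioc_subset_Icc_self).time_mul fun t => Real.exp (C * t)).one_add_max_zero_cube
  refine ⟨6 * Real.exp (C * t₀) ^ 2 + 3 * K * Real.exp (C * t₀) + 1,
    fun x t => 1 + weightedArclength ξ C x t ^ 3, _, _,
    { rate_nonneg := by positivity
      continuousOn := ?_
      arclength := hρ_arclength
      one_le := fun x _ t _ => le_add_of_nonneg_right (pow_nonneg (hσ_nonneg x t) 3)
      monotoneOn := fun x hx t ht u hu htu =>
        add_le_add_right (pow_le_pow_left₀ (hσ_nonneg x t) (hσ_mono x hx ht hu htu) 3) 1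
      exhaustion := fun R => ?_
      lt := fun x hx t ht => ?_ }⟩
  · have hcont : ContinuousOn (fun p : ℝ × ℝ => arclengthFromOne ξ p.1 p.2) (Ioi 0 ×ˢ Icc 0 t₀) :=
      continuousOn_primitive_of_continuousOn_Ioi_prod one_pos hξ_cont
    simp only [weightedArclength]
    fun_prop
  · filter_upwards [eventually_le_weightedArclength hσ_mono hcomplete (max R 1)] with x hσ t ht
    calc R ≤ weightedArclength ξ C x t := (le_max_left R 1).trans (hσ t ht)
      _ ≤ weightedArclength ξ C x t ^ 3 :=
        le_self_pow₀ ((le_max_right R 1).trans (hσ t ht)) three_ne_zero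
      _ ≤ 1 + weightedArclength ξ C x t ^ 3 := le_add_of_nonneg_left zero_le_one
  · have htI := Ioc_subset_Icc_self ht
    have hlt := cubic_barrier_lt (hσ_nonneg x t) (Real.exp_pos (C * t)).le
      (Real.exp_le_exp.2 (mul_le_mul_of_nonneg_left ht.2 hC)) hK fun hpos => hH x
        (le_of_not_ge fun hx1 => hpos.ne' (weightedArclength_eq_zero hx hx1 fun y hy =>
          hξ y hy t htI)) t htI
    simpa only [weightedArclength, mul_one, mul_zero, add_zero] using hlt

end Barrier

/-! ### Functions smooth in space and time -/

section Smooth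

variable {ξ g : ℝ → ℝ → ℝ} {I : Set ℝ}

theorem hasDerivAt_space_of_contDiffOn {n : WithTop ℕ∞} (hn : n ≠ 0) {x t : ℝ}
    (hg : ContDiffOn ℝ n (fun p : ℝ × ℝ => g p.1 p.2) (Ioi 0 ×ˢ I)) (hx : 0 < x) (ht : t ∈ I) :
    HasDerivAt (g · t)
      (fderivWithin ℝ (fun p : ℝ × ℝ => g p.1 p.2) (Ioi 0 ×ˢ I) (x, t) (1, 0)) x := by
  have hline : HasDerivAt (fun y : ℝ => (y, t)) ((1 : ℝ), (0 : ℝ)) x :=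
    (hasDerivAt_id x).prodMk (hasDerivAt_const x t)
  have hcomp := (hg.differentiableOn hn (x, t) ⟨hx, ht⟩).hasFDerivWithinAt.comp_hasDerivAt x hline
    (by filter_upwards [lt_mem_nhds hx] with y hy using ⟨hy, ht⟩)
  exact hcomp

theorem hasDerivAt_time_of_contDiffOn {n : WithTop ℕ∞} (hn : n ≠ 0) {x t : ℝ}
    (hg : ContDiffOn ℝ n (fun p : ℝ × ℝ => g p.1 p.2) (Ioi 0 ×ˢ I)) (hx : 0 < x)
    (ht : I ∈ 𝓝 t) : HasDerivAt (g x) (deriv (g x) t) t := by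
  have hgt : DifferentiableAt ℝ (fun p : ℝ × ℝ => g p.1 p.2) (x, t) :=
    (hg.contDiffAt (prod_mem_nhds (Ioi_mem_nhds hx) ht)).differentiableAt hn
  have hpair : DifferentiableAt ℝ (fun u : ℝ => (x, u)) t := by fun_prop
  exact (hgt.comp t hpair).hasDerivAt

theorem contDiffOn_dS (hI : UniqueDiffOn ℝ I) {m n : WithTop ℕ∞} (hmn : m + 1 ≤ n)
    (hξ : ContDiffOn ℝ m (fun p : ℝ × ℝ => ξ p.1 p.2) (Ioi 0 ×ˢ I))
    (hξ_ne : ∀ x > 0, ∀ t ∈ I, ξ x t ≠ 0)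
    (hg : ContDiffOn ℝ n (fun p : ℝ × ℝ => g p.1 p.2) (Ioi 0 ×ˢ I)) :
    ContDiffOn ℝ m (fun p : ℝ × ℝ => dS ξ g p.1 p.2) (Ioi 0 ×ˢ I) := by
  have hn : n ≠ 0 := (one_pos.trans_le (le_add_self.trans hmn)).ne'
  have hfderiv : ContDiffOn ℝ m
      (fderivWithin ℝ (fun p : ℝ × ℝ => g p.1 p.2) (Ioi 0 ×ˢ I)) (Ioi 0 ×ˢ I) :=
    hg.fderivWithin (isOpen_Ioi.uniqueDiffOn.prod hI) hmn
  have hderiv : ContDiffOn ℝ m (fun p : ℝ × ℝ => deriv (g · p.2) p.1) (Ioi 0 ×ˢ I) :=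
    (hfderiv.clm_apply (contDiffOn_const (c := ((1 : ℝ), (0 : ℝ))))).congr fun p hp =>
      (hasDerivAt_space_of_contDiffOn hn hg hp.1 hp.2).deriv
  exact (hξ.inv fun p hp => hξ_ne p.1 hp.1 p.2 hp.2).mul hderiv

theorem hasDerivAt_dS (hξ_ne : ∀ x > 0, ∀ t ∈ I, ξ x t ≠ 0) {n : WithTop ℕ∞} (hn : n ≠ 0)
    (hg : ContDiffOn ℝ n (fun p : ℝ × ℝ => g p.1 p.2) (Ioi 0 ×ˢ I)) {x t : ℝ} (hx : 0 < x)
    (ht : t ∈ I) : HasDerivAt (g · t) (ξ x t * dS ξ g x t) x :=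
  (hasDerivAt_space_of_contDiffOn hn hg hx ht).differentiableAt.hasDerivAt.congr_deriv
    (mul_inv_cancel_left₀ (hξ_ne x hx t ht) _).symm

theorem hasArclengthDerivs_dS (hI : UniqueDiffOn ℝ I)
    (hξ : ContDiffOn ℝ 1 (fun p : ℝ × ℝ => ξ p.1 p.2) (Ioi 0 ×ˢ I))
    (hξ_ne : ∀ x > 0, ∀ t ∈ I, ξ x t ≠ 0)
    (hg : ContDiffOn ℝ 2 (fun p : ℝ × ℝ => g p.1 p.2) (Ioi 0 ×ˢ I)) :
    HasArclengthDerivs ξ g (dS ξ g) (dS ξ (dS ξ g)) I := fun _ hx _ ht =>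
  ⟨hasDerivAt_dS hξ_ne two_ne_zero hg hx ht,
    hasDerivAt_dS hξ_ne one_ne_zero (contDiffOn_dS hI one_add_one_eq_two.le hξ hξ_ne hg) hx ht⟩

end Smooth

namespace WarpedBergerFlow

variable (F : WarpedBergerFlow)

/-! ### The flow equations -/

theorem ξ_ne_zero : ∀ x > 0, ∀ t ∈ Ico 0 F.T, F.ξ x t ≠ 0 := fun x hx t ht =>
  (F.ξ_pos x hx t ht).ne'

theorem b_ne_zero : ∀ x > 0, ∀ t ∈ Ico 0 F.T, F.b x t ≠ 0 := fun x hx t ht =>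
  (F.b_pos x hx t ht).ne'

theorem c_ne_zero : ∀ x > 0, ∀ t ∈ Ico 0 F.T, F.c x t ≠ 0 := fun x hx t ht =>
  (F.c_pos x hx t ht).ne'

theorem contDiffOn_bS :
    ContDiffOn ℝ (⊤ : ℕ∞) (fun p : ℝ × ℝ => F.bS p.1 p.2) (Ioi 0 ×ˢ Ico 0 F.T) :=
  contDiffOn_dS (uniqueDiffOn_Ico 0 F.T) (by simp) F.smooth_ξ F.ξ_ne_zero F.smooth_b

theorem contDiffOn_cS :
    ContDiffOn ℝ (⊤ : ℕ∞) (fun p : ℝ × ℝ => F.cS p.1 p.2) (Ioi 0 ×ˢ Ico 0 F.T) :=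
  contDiffOn_dS (uniqueDiffOn_Ico 0 F.T) (by simp) F.smooth_ξ F.ξ_ne_zero F.smooth_c

theorem hasArclengthDerivs_b : HasArclengthDerivs F.ξ F.b F.bS F.bSS (Ico 0 F.T) :=
  hasArclengthDerivs_dS (uniqueDiffOn_Ico 0 F.T) (F.smooth_ξ.of_le (by simp)) F.ξ_ne_zero
    (mod_cast contDiffOn_infty.1 F.smooth_b 2)

theorem hasArclengthDerivs_c : HasArclengthDerivs F.ξ F.c F.cS F.cSS (Ico 0 F.T) :=
  hasArclengthDerivs_dS (uniqueDiffOn_Ico 0 F.T) (F.smooth_ξ.of_le (by simp)) F.ξ_ne_zero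
    (mod_cast contDiffOn_infty.1 F.smooth_c 2)

theorem hasArclengthDerivs_log_b :
    HasArclengthDerivs F.ξ (fun x t => Real.log (F.b x t)) (fun x t => F.bS x t / F.b x t)
      (fun x t => F.bSS x t / F.b x t - (F.bS x t / F.b x t) ^ 2) (Ico 0 F.T) :=
  F.hasArclengthDerivs_b.log F.b_ne_zero

theorem hasArclengthDerivs_log_c :
    HasArclengthDerivs F.ξ (fun x t => Real.log (F.c x t)) (fun x t => F.cS x t / F.c x t)
      (fun x t => F.cSS x t / F.c x t - (F.cS x t / F.c x t) ^ 2) (Ico 0 F.T) :=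
  F.hasArclengthDerivs_c.log F.c_ne_zero

theorem hasDerivAt_time_b {x t : ℝ} (hx : 0 < x) (ht : t ∈ Ioo 0 F.T) :
    HasDerivAt (F.b x) (F.bSS x t + F.meanH x t * F.bS x t - F.bS x t ^ 2 / F.b x t
      + 2 * (F.c x t ^ 2 - 2 * F.b x t ^ 2) / F.b x t ^ 3) t := by
  have htT := Ioo_subset_Ico_self ht
  refine (hasDerivAt_time_of_contDiffOn (by simp) F.smooth_b hx
    (Ico_mem_nhds ht.1 ht.2)).congr_deriv ((F.eq_b x hx t htT).trans ?_)
  simp only [meanH, bSS, bS, cS]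
  ring

theorem hasDerivAt_time_log_b {x t : ℝ} (hx : 0 < x) (ht : t ∈ Ioo 0 F.T) :
    HasDerivAt (fun u => Real.log (F.b x u)) (-(F.k01 x t + F.k12 x t + F.k13 x t)) t := by
  have hb := F.b_ne_zero x hx t (Ioo_subset_Ico_self ht)
  have hc := F.c_ne_zero x hx t (Ioo_subset_Ico_self ht)
  refine ((F.hasDerivAt_time_b hx ht).log hb).congr_deriv ?_
  simp only [k01, k12, k13, meanH]
  field_simp
  ring

theorem hasDerivAt_time_log_c {x t : ℝ} (hx : 0 < x) (ht : t ∈ Ioo 0 F.T) :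
    HasDerivAt (fun u => Real.log (F.c x u)) (-(F.k03 x t + 2 * F.k13 x t)) t := by
  have htT := Ioo_subset_Ico_self ht
  have hb := F.b_ne_zero x hx t htT
  have hc := F.c_ne_zero x hx t htT
  refine ((hasDerivAt_time_of_contDiffOn (by simp) F.smooth_c hx
    (Ico_mem_nhds ht.1 ht.2)).log hc).congr_deriv ?_
  rw [F.eq_c x hx t htT]
  simp only [k03, k13, cSS, bS, cS]
  field_simp
  ring

theorem hasDerivAt_time_log_ξ {x t : ℝ} (hx : 0 < x) (ht : t ∈ Ioo 0 F.T) :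
    HasDerivAt (fun u => Real.log (F.ξ x u)) (2 * F.k01 x t + F.k03 x t) t := by
  have htT := Ioo_subset_Ico_self ht
  have hξ := F.ξ_ne_zero x hx t htT
  refine ((hasDerivAt_time_of_contDiffOn (by simp) F.smooth_ξ hx
    (Ico_mem_nhds ht.1 ht.2)).log hξ).congr_deriv ?_
  rw [F.eq_ξ x hx t htT]
  simp only [k01, k03, cSS, bSS]
  field_simp
  ring

theorem continuousOn_log_ξ :
    ContinuousOn (fun p : ℝ × ℝ => Real.log (F.ξ p.1 p.2)) (Ioi 0 ×ˢ Ico 0 F.T) :=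
  F.smooth_ξ.continuousOn.log fun p hp => F.ξ_ne_zero p.1 hp.1 p.2 hp.2

theorem continuousOn_log_b :
    ContinuousOn (fun p : ℝ × ℝ => Real.log (F.b p.1 p.2)) (Ioi 0 ×ˢ Ico 0 F.T) :=
  F.smooth_b.continuousOn.log fun p hp => F.b_ne_zero p.1 hp.1 p.2 hp.2

theorem continuousOn_log_c :
    ContinuousOn (fun p : ℝ × ℝ => Real.log (F.c p.1 p.2)) (Ioi 0 ×ˢ Ico 0 F.T) :=
  F.smooth_c.continuousOn.log fun p hp => F.c_ne_zero p.1 hp.1 p.2 hp.2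

theorem continuousOn_meanH :
    ContinuousOn (fun p : ℝ × ℝ => F.meanH p.1 p.2) (Ioi 0 ×ˢ Ico 0 F.T) :=
  ((F.contDiffOn_bS.continuousOn.const_mul 2).div F.smooth_b.continuousOn
      fun p hp => F.b_ne_zero p.1 hp.1 p.2 hp.2).add
    (F.contDiffOn_cS.continuousOn.div F.smooth_c.continuousOn
      fun p hp => F.c_ne_zero p.1 hp.1 p.2 hp.2)

/-- The logarithm of `c/b`; the ordering `c ≤ b` says that it is nonpositive. -/
def logRatio (x t : ℝ) : ℝ := Real.log (F.c x t) - Real.log (F.b x t)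

theorem logRatio_nonpos_iff {x t : ℝ} (hx : 0 < x) (ht : t ∈ Ico 0 F.T) :
    F.logRatio x t ≤ 0 ↔ F.c x t ≤ F.b x t :=
  sub_nonpos.trans (Real.log_le_log_iff (F.c_pos x hx t ht) (F.b_pos x hx t ht))

theorem continuousOn_logRatio :
    ContinuousOn (fun p : ℝ × ℝ => F.logRatio p.1 p.2) (Ioi 0 ×ˢ Ico 0 F.T) :=
  F.continuousOn_log_c.sub F.continuousOn_log_b

theorem hasDerivAt_time_logRatio {x t : ℝ} (hx : 0 < x) (ht : t ∈ Ioo 0 F.T) :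
    HasDerivAt (F.logRatio x) (F.k01 x t + F.k12 x t - F.k13 x t - F.k03 x t) t :=
  ((F.hasDerivAt_time_log_c hx ht).sub (F.hasDerivAt_time_log_b hx ht)).congr_deriv (by ring)

theorem tendsto_c_div_b_origin {t : ℝ} (ht : t ∈ Ico 0 F.T) :
    Tendsto (fun x => F.c x t / F.b x t) (𝓝[>] 0) (𝓝 1) := by
  have hpos : ∀ᶠ x : ℝ in 𝓝[>] 0, 0 < x := self_mem_nhdsWithin
  have hbS : Tendsto (F.bS · t) (𝓝[>] 0) (𝓝 1) := F.bs_origin t ht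
  have hcS : Tendsto (F.cS · t) (𝓝[>] 0) (𝓝 1) := F.cs_origin t ht
  refine HasDerivAt.lhopital_zero_nhdsGT
    (hpos.mono fun x hx => (F.hasArclengthDerivs_c x hx t ht).1)
    (hpos.mono fun x hx => (F.hasArclengthDerivs_b x hx t ht).1) ?_
    (F.c_origin t ht) (F.b_origin t ht) ?_
  · filter_upwards [hpos, hbS.eventually_ne one_ne_zero] with x hx hbSx
    exact mul_ne_zero (F.ξ_ne_zero x hx t ht) hbSx
  · have hquot : Tendsto (fun x => F.cS x t / F.bS x t) (𝓝[>] 0) (𝓝 (1 / 1)) :=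
      hcS.div hbS one_ne_zero
    rw [div_one] at hquot
    refine hquot.congr' ?_
    filter_upwards [hpos] with x hx
    rw [mul_div_mul_left _ _ (F.ξ_ne_zero x hx t ht)]

theorem tendsto_logRatio_origin {t : ℝ} (ht : t ∈ Ico 0 F.T) :
    Tendsto (F.logRatio · t) (𝓝[>] 0) (𝓝 0) := by
  have hlog := (F.tendsto_c_div_b_origin ht).log one_ne_zero
  rw [Real.log_one] at hlog
  refine hlog.congr' ?_
  filter_upwards [self_mem_nhdsWithin] with x hx
  exact Real.log_div (F.c_ne_zero x hx t ht) (F.b_ne_zero x hx t ht)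

theorem tendsto_arclengthFromOne {t : ℝ} (ht : t ∈ Ico 0 F.T) :
    Tendsto (arclengthFromOne F.ξ · t) atTop atTop :=
  tendsto_intervalIntegral_atTop_of_le zero_le_one (F.complete t ht)

/-! ### Subsolutions along the flow -/

theorem isSubsolution_logRatio {t₀ : ℝ} (ht₀ : t₀ < F.T) :
    IsSubsolution F.ξ F.meanH t₀ F.logRatio
      (fun x t => F.cS x t / F.c x t - F.bS x t / F.b x t)
      (fun x t => (F.cSS x t / F.c x t - (F.cS x t / F.c x t) ^ 2)
        - (F.bSS x t / F.b x t - (F.bS x t / F.b x t) ^ 2))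
      (fun x t => F.k01 x t + F.k12 x t - F.k13 x t - F.k03 x t) where
  continuousOn := F.continuousOn_logRatio.mono (prod_mono_right (Icc_subset_Ico_right ht₀))
  arclength := (F.hasArclengthDerivs_log_c.sub F.hasArclengthDerivs_log_b).mono
    (Ioc_subset_Icc_self.trans (Icc_subset_Ico_right ht₀))
  hasDerivAt_time x hx t ht := F.hasDerivAt_time_logRatio hx ⟨ht.1, ht.2.trans_lt ht₀⟩
  le x hx t ht hpos := by
    have htT : t ∈ Ico 0 F.T := ⟨ht.1.le, ht.2.trans_lt ht₀⟩
    have hb := F.b_pos x hx t htT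
    have hc := F.c_ne_zero x hx t htT
    have hbc : F.b x t < F.c x t :=
      lt_of_not_ge fun hle => hpos.not_ge ((F.logRatio_nonpos_iff hx htT).2 hle)
    have hreaction : 0 ≤ 4 * (F.c x t ^ 2 - F.b x t ^ 2) / F.b x t ^ 4 :=
      div_nonneg (mul_nonneg zero_le_four (sub_nonneg.2 (by gcongr))) (by positivity)
    refine (sub_nonneg.1 (hreaction.trans_eq ?_))
    simp only [k01, k12, k13, k03, meanH]
    field_simp
    ring

theorem isSubsolution_b_sq {t₀ : ℝ} (ht₀ : t₀ < F.T)
    (hcb : ∀ x > 0, ∀ t ∈ Ioc 0 t₀, F.c x t ≤ F.b x t) (M : ℝ) :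
    IsSubsolution F.ξ F.meanH t₀ (fun x t => F.b x t ^ 2 + (4 * t - M))
      (fun x t => 2 * F.b x t * F.bS x t)
      (fun x t => 2 * F.bS x t ^ 2 + 2 * F.b x t * F.bSS x t)
      (fun x t => 2 * F.b x t * (F.bSS x t + F.meanH x t * F.bS x t - F.bS x t ^ 2 / F.b x t
        + 2 * (F.c x t ^ 2 - 2 * F.b x t ^ 2) / F.b x t ^ 3) + 4) where
  continuousOn := by
    have hb : ContinuousOn (fun p : ℝ × ℝ => F.b p.1 p.2) (Ioi 0 ×ˢ Icc 0 t₀) :=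
      F.smooth_b.continuousOn.mono (prod_mono_right (Icc_subset_Ico_right ht₀))
    fun_prop
  arclength := ((F.hasArclengthDerivs_b.comp (φ := fun u => u ^ 2) (φ₁ := fun u => 2 * u)
    (φ₂ := fun _ => 2) (fun _ _ _ _ => by simpa using hasDerivAt_pow 2 _)
    (fun _ _ _ _ => by simpa using hasDerivAt_const_mul (2 : ℝ))).add_time
      fun t => 4 * t - M).mono (Ioc_subset_Icc_self.trans (Icc_subset_Ico_right ht₀))
  hasDerivAt_time x hx t ht := by
    have hb := (F.hasDerivAt_time_b hx ⟨ht.1, ht.2.trans_lt ht₀⟩).pow 2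
    have htime : HasDerivAt (fun u => 4 * u - M) 4 t := by
      simpa using ((hasDerivAt_id t).const_mul 4).sub_const M
    exact (hb.add htime).congr_deriv (by simp)
  le x hx t ht _ := by
    have htT : t ∈ Ico 0 F.T := ⟨ht.1.le, ht.2.trans_lt ht₀⟩
    have hb := F.b_pos x hx t htT
    have hc := F.c_pos x hx t htT
    have hreaction : 0 ≤ 4 * F.bS x t ^ 2 + 4 * (F.b x t ^ 2 - F.c x t ^ 2) / F.b x t ^ 2 :=
      add_nonneg (by positivity) <| div_nonneg
        (mul_nonneg zero_le_four (sub_nonneg.2 (pow_le_pow_left₀ hc.le (hcb x hx t ht) 2)))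
        (by positivity)
    refine (sub_nonneg.1 (hreaction.trans_eq ?_))
    simp only [meanH]
    field_simp
    ring

/-! ### Consequences of a curvature bound -/

theorem meanH_sq_le (x t : ℝ) :
    F.meanH x t ^ 2 ≤ 3 * (2 * (F.bS x t / F.b x t) ^ 2 + (F.cS x t / F.c x t) ^ 2) := by
  rw [meanH, mul_div_assoc]
  nlinarith [sq_nonneg (F.bS x t / F.b x t - F.cS x t / F.c x t)]

theorem hasDerivAt_meanH {x t : ℝ} (hx : 0 < x) (ht : t ∈ Ico 0 F.T) :
    HasDerivAt (F.meanH · t)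
      (F.ξ x t * (2 * (F.bSS x t / F.b x t - (F.bS x t / F.b x t) ^ 2)
        + (F.cSS x t / F.c x t - (F.cS x t / F.c x t) ^ 2))) x := by
  simp only [meanH, mul_div_assoc]
  exact (((F.hasArclengthDerivs_log_b x hx t ht).2.const_mul 2).add
    (F.hasArclengthDerivs_log_c x hx t ht).2).congr_deriv (by ring)

/-- `C` bounds the curvature norm `|Rm|` on `(0,∞) × [0,t₀]`, for some `t₀ < T`. -/
structure CurvatureBound (t₀ : ℝ) (C : ℝ≥0) : Prop where
  lt_T : t₀ < F.T
  rmNorm_le : ∀ x > 0, ∀ t ∈ Icc 0 t₀, F.RmNorm x t ≤ C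

variable {F}

theorem BoundedCurvature.exists_curvatureBound (hF : F.BoundedCurvature) {t₀ : ℝ}
    (ht₀ : t₀ ∈ Ico 0 F.T) : ∃ C, F.CurvatureBound t₀ C := by
  obtain ⟨C, hC⟩ := hF t₀ ht₀
  exact ⟨C.toNNReal, ht₀.2, fun x hx t ht => (hC x hx t ht).trans (Real.le_coe_toNNReal C)⟩

namespace CurvatureBound

variable {t₀ : ℝ} {C : ℝ≥0}

theorem Icc_subset (h : F.CurvatureBound t₀ C) : Icc 0 t₀ ⊆ Ico 0 F.T :=
  Icc_subset_Ico_right h.lt_T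

theorem lipschitzOnWith_of_abs_deriv_le (h : F.CurvatureBound t₀ C) {x : ℝ} (hx : 0 < x)
    {g g' : ℝ → ℝ} {m : ℝ≥0} (hg : ContinuousOn g (Ico 0 F.T))
    (hderiv : ∀ t ∈ Ioo 0 F.T, HasDerivAt g (g' t) t)
    (hle : ∀ t, |g' t| ≤ m * F.RmNorm x t) : LipschitzOnWith (m * C) g (Icc 0 t₀) := by
  refine lipschitzOnWith_of_abs_deriv_interior_le (convex_Icc 0 t₀) (hg.mono h.Icc_subset)
    (g' := g') ?_ ?_ <;> rw [interior_Icc] <;> intro t ht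
  · exact hderiv t ⟨ht.1, ht.2.trans h.lt_T⟩
  · exact (hle t).trans <| NNReal.coe_mul m C ▸
      mul_le_mul_of_nonneg_left (h.rmNorm_le x hx t (Ioo_subset_Icc_self ht)) m.coe_nonneg

theorem lipschitzOnWith_log_ξ (h : F.CurvatureBound t₀ C) {x : ℝ} (hx : 0 < x) :
    LipschitzOnWith (2 * C) (fun t => Real.log (F.ξ x t)) (Icc 0 t₀) := by
  refine h.lipschitzOnWith_of_abs_deriv_le hx
    (ContinuousOn.uncurry_left (f := fun y u => Real.log (F.ξ y u)) x hx F.continuousOn_log_ξ)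
    (fun t ht => F.hasDerivAt_time_log_ξ hx ht) fun t => ?_
  simp only [RmNorm]
  push_cast
  grind

theorem lipschitzOnWith_log_b (h : F.CurvatureBound t₀ C) {x : ℝ} (hx : 0 < x) :
    LipschitzOnWith C (fun t => Real.log (F.b x t)) (Icc 0 t₀) := by
  rw [← one_mul C]
  refine h.lipschitzOnWith_of_abs_deriv_le hx
    (ContinuousOn.uncurry_left (f := fun y u => Real.log (F.b y u)) x hx F.continuousOn_log_b)
    (fun t ht => F.hasDerivAt_time_log_b hx ht) fun t => ?_
  simp only [RmNorm]
  push_cast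
  grind

theorem lipschitzOnWith_logRatio (h : F.CurvatureBound t₀ C) {x : ℝ} (hx : 0 < x) :
    LipschitzOnWith C (F.logRatio x) (Icc 0 t₀) := by
  rw [← one_mul C]
  refine h.lipschitzOnWith_of_abs_deriv_le hx
    (ContinuousOn.uncurry_left x hx F.continuousOn_logRatio)
    (fun t ht => F.hasDerivAt_time_logRatio hx ht) fun t => ?_
  simp only [RmNorm]
  push_cast
  grind

theorem b_le_exp_mul (h : F.CurvatureBound t₀ C) {x t : ℝ} (hx : 0 < x) (ht : t ∈ Icc 0 t₀) :
    F.b x t ≤ Real.exp (C * t₀) * F.b x 0 := by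
  have h0 : (0 : ℝ) ∈ Icc 0 t₀ := ⟨le_rfl, ht.1.trans ht.2⟩
  have hle := le_exp_mul_of_lipschitzOnWith_log (fun t ht => F.b_pos x hx t (h.Icc_subset ht))
    (h.lipschitzOnWith_log_b hx) h0 ht
  rw [Real.dist_0_eq_abs, abs_of_nonneg ht.1] at hle
  refine hle.trans (mul_le_mul_of_nonneg_right (Real.exp_le_exp.2 ?_)
    (F.b_pos x hx 0 (h.Icc_subset h0)).le)
  exact mul_le_mul_of_nonneg_left ht.2 C.coe_nonneg

theorem logRatio_le (h : F.CurvatureBound t₀ C) {x t : ℝ} (hx : 0 < x) (ht : t ∈ Icc 0 t₀) :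
    F.logRatio x t ≤ C * t₀ := by
  have h0 : (0 : ℝ) ∈ Icc 0 t₀ := ⟨le_rfl, ht.1.trans ht.2⟩
  have hinit : F.logRatio x 0 ≤ 0 :=
    (F.logRatio_nonpos_iff hx (h.Icc_subset h0)).2 (F.ordered_init x hx)
  have hlip : F.logRatio x t - F.logRatio x 0 ≤ C * t := by
    have hdist := (h.lipschitzOnWith_logRatio hx).dist_le_mul t ht 0 h0
    rw [Real.dist_0_eq_abs, abs_of_nonneg ht.1] at hdist
    exact (le_abs_self _).trans hdist
  linarith [mul_le_mul_of_nonneg_left ht.2 C.coe_nonneg]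

theorem eventually_logRatio_le (h : F.CurvatureBound t₀ C) {ε : ℝ} (hε : 0 < ε) :
    ∀ᶠ x in 𝓝[>] 0, ∀ t ∈ Icc 0 t₀, F.logRatio x t ≤ ε := by
  have hunif : TendstoUniformlyOn (fun x : Ioi (0 : ℝ) => F.logRatio x) (fun _ => 0) atBot
      (Icc 0 t₀) :=
    tendstoUniformlyOn_of_lipschitzOnWith isCompact_Icc
      (fun x => h.lipschitzOnWith_logRatio x.2) fun t ht => by
        have hlim := F.tendsto_logRatio_origin (h.Icc_subset ht)
        rwa [← map_coe_Ioi_atBot, tendsto_map'_iff] at hlim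
  rw [← map_coe_Ioi_atBot, eventually_map]
  filter_upwards [Metric.tendstoUniformlyOn_iff.1 hunif ε hε] with x hx t ht
  exact (le_abs_self _).trans (by simpa using (hx t ht).le)

/-- The Riccati inequality `H_s ≤ 2C - H²/3` prevents `H` from growing beyond its values on the
sphere `x = 1`. -/
theorem exists_meanH_le (h : F.CurvatureBound t₀ C) :
    ∃ K, 0 ≤ K ∧ ∀ x ≥ 1, ∀ t ∈ Icc 0 t₀, F.meanH x t ≤ K := by
  have hcont : ContinuousOn (F.meanH 1) (Ico 0 F.T) :=
    ContinuousOn.uncurry_left (f := F.meanH) 1 (mem_Ioi.2 one_pos) F.continuousOn_meanH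
  obtain ⟨K₀, hK₀⟩ := isCompact_Icc.bddAbove_image (hcont.mono h.Icc_subset)
  have hC : 0 ≤ (C : ℝ) := C.coe_nonneg
  obtain ⟨K, hK₀K, hK⟩ : ∃ K, K₀ ≤ K ∧ 6 * C + 1 ≤ K := ⟨_, le_max_left _ _, le_max_right _ _⟩
  refine ⟨K, by linarith, fun x hx t ht => ?_⟩
  have hderiv : ∀ y ∈ Icc 1 x, HasDerivAt (F.meanH · t) _ y := fun y hy =>
    F.hasDerivAt_meanH (one_pos.trans_le hy.1) (h.Icc_subset ht)
  refine image_le_of_deriv_right_lt_deriv_boundary (B := fun _ => K) (B' := fun _ => 0)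
    (fun y hy => (hderiv y hy).continuousAt.continuousWithinAt)
    (fun y hy => (hderiv y (Ico_subset_Icc_self hy)).hasDerivWithinAt)
    ((hK₀ (mem_image_of_mem _ ht)).trans hK₀K)
    (fun y => hasDerivAt_const y _) (fun y hy heq => ?_) ⟨hx, le_rfl⟩
  have hy₀ : 0 < y := one_pos.trans_le hy.1
  refine mul_neg_of_pos_of_neg (F.ξ_pos y hy₀ t (h.Icc_subset ht)) ?_
  have hcurv : 2 * (F.bSS y t / F.b y t) + F.cSS y t / F.c y t ≤ 2 * C := by
    have hRm := h.rmNorm_le y hy₀ t ht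
    simp only [RmNorm, k01, k03, neg_div] at hRm
    grind
  have hsq := heq ▸ F.meanH_sq_le y t
  nlinarith

theorem exists_isBarrier (h : F.CurvatureBound t₀ C) :
    ∃ A ρ ρ₁ ρ₂, IsBarrier F.ξ F.meanH t₀ A ρ ρ₁ ρ₂ := by
  obtain ⟨K, hK, hH⟩ := h.exists_meanH_le
  have hξ : ∀ x > 0, ∀ t ∈ Icc 0 t₀, 0 < F.ξ x t := fun x hx t ht =>
    F.ξ_pos x hx t (h.Icc_subset ht)
  exact exists_isBarrier_of_le (2 * C).coe_nonneg hK
    (F.smooth_ξ.continuousOn.mono (prod_mono_right h.Icc_subset))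
    (fun x hx t ht => (hξ x hx t ht).le)
    (fun x hx => monotoneOn_exp_mul_of_lipschitzOnWith_log (hξ x hx) (h.lipschitzOnWith_log_ξ hx))
    (F.tendsto_arclengthFromOne ⟨le_rfl, F.T_pos⟩) hH

theorem nonpos_of_isSubsolution (h : F.CurvatureBound t₀ C) {f f₁ f₂ fₜ : ℝ → ℝ → ℝ}
    (hf : IsSubsolution F.ξ F.meanH t₀ f f₁ f₂ fₜ) (hinit : ∀ x > 0, f x 0 ≤ 0) {B : ℝ}
    (hB : ∀ x > 0, ∀ t ∈ Icc 0 t₀, f x t ≤ B)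
    (horigin : ∀ ε > 0, ∀ᶠ x in 𝓝[>] 0, ∀ t ∈ Icc 0 t₀, f x t ≤ ε) :
    ∀ x > 0, ∀ t ∈ Icc 0 t₀, f x t ≤ 0 := by
  obtain ⟨A, ρ, ρ₁, ρ₂, hρ⟩ := h.exists_isBarrier
  exact hf.nonpos_of_isBarrier hρ
    (fun x hx t ht => F.ξ_pos x hx t (h.Icc_subset (Ioc_subset_Icc_self ht))) hinit hB horigin

theorem c_le_b (h : F.CurvatureBound t₀ C) {x t : ℝ} (hx : 0 < x) (ht : t ∈ Icc 0 t₀) :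
    F.c x t ≤ F.b x t :=
  (F.logRatio_nonpos_iff hx (h.Icc_subset ht)).1 <|
    h.nonpos_of_isSubsolution (F.isSubsolution_logRatio h.lt_T)
      (fun y hy => (F.logRatio_nonpos_iff hy ⟨le_rfl, F.T_pos⟩).2 (F.ordered_init y hy))
      (fun _ hy _ hu => h.logRatio_le hy hu) (fun _ hε => h.eventually_logRatio_le hε) x hx t ht

theorem b_sq_le (h : F.CurvatureBound t₀ C) {M : ℝ} (hM : ∀ x > 0, F.b x 0 ^ 2 ≤ M)
    (ht₀ : 4 * t₀ ≤ M) {x t : ℝ} (hx : 0 < x) (ht : t ∈ Icc 0 t₀) :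
    F.b x t ^ 2 ≤ M - 4 * t := by
  have hbound : ∀ y > 0, ∀ u ∈ Icc 0 t₀,
      F.b y u ^ 2 + (4 * u - M) ≤ (Real.exp (C * t₀) * F.b y 0) ^ 2 := fun y hy u hu => by
    have hsq := pow_le_pow_left₀ (F.b_pos y hy u (h.Icc_subset hu)).le (h.b_le_exp_mul hy hu) 2
    linarith [hu.2]
  have hzero : Tendsto (fun y => (Real.exp (C * t₀) * F.b y 0) ^ 2) (𝓝[>] 0) (𝓝 0) := by
    simpa using ((F.b_origin 0 ⟨le_rfl, F.T_pos⟩).const_mul (Real.exp (C * t₀))).pow 2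
  have hsub := F.isSubsolution_b_sq h.lt_T
    (fun y hy u hu => h.c_le_b hy (Ioc_subset_Icc_self hu)) M
  have hnonpos := h.nonpos_of_isSubsolution hsub (B := Real.exp (C * t₀) ^ 2 * M)
    (fun y hy => by linarith [hM y hy])
    (fun y hy u hu => (hbound y hy u hu).trans <| by
      rw [mul_pow]
      exact mul_le_mul_of_nonneg_left (hM y hy) (by positivity))
    (fun ε hε => by
      filter_upwards [self_mem_nhdsWithin, hzero.eventually_le_const hε] with y hy hle u hu
      exact (hbound y hy u hu).trans hle) x hx t ht
  linarith

end CurvatureBound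

end WarpedBergerFlow

namespace WarpedBergerFlow.BoundedCurvature

variable {F : WarpedBergerFlow}

theorem lifetime_le (hF : F.BoundedCurvature) {M : ℝ} (hM : ∀ x > 0, F.b x 0 ^ 2 ≤ M) :
    F.T ≤ M / 4 := by
  by_contra! hlt
  have hM_nonneg : 0 ≤ M := (sq_nonneg _).trans (hM 1 one_pos)
  have hmem : M / 4 ∈ Ico 0 F.T := ⟨by positivity, hlt⟩
  obtain ⟨C, hC⟩ := hF.exists_curvatureBound hmem
  have hle := hC.b_sq_le hM (by linarith) one_pos ⟨hmem.1, le_rfl⟩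
  have hpos := pow_pos (F.b_pos 1 one_pos (M / 4) hmem) 2
  linarith

theorem b_le (hF : F.BoundedCurvature) {B : ℝ} (hB : ∀ x > 0, F.b x 0 ≤ B) {x t : ℝ}
    (hx : 0 < x) (ht : t ∈ Ico 0 F.T) : F.b x t ≤ B := by
  have hinit (y : ℝ) (hy : 0 < y) : 0 < F.b y 0 := F.b_pos y hy 0 ⟨le_rfl, F.T_pos⟩
  have hB_sq : ∀ y > 0, F.b y 0 ^ 2 ≤ B ^ 2 := fun y hy =>
    pow_le_pow_left₀ (hinit y hy).le (hB y hy) 2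
  obtain ⟨C, hC⟩ := hF.exists_curvatureBound ht
  have hle := hC.b_sq_le hB_sq (by linarith [hF.lifetime_le hB_sq, ht.2]) hx ⟨ht.1, le_rfl⟩
  exact le_of_sq_le_sq (by linarith [ht.1]) ((hinit x hx).le.trans (hB x hx))

end WarpedBergerFlow.BoundedCurvature

theorem warpedBerger_finite_time_general (F : WarpedBergerFlow) (hBC : F.BoundedCurvature)
    (hb : ∃ M : ℝ, ∀ x > 0, F.b x 0 ≤ M) :
    (∀ t ∈ Set.Ico (0:ℝ) F.T, ∀ x > 0,
        F.b x t ≤ sSup {r : ℝ | ∃ y > 0, r = F.b y 0}) ∧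
    F.T ≤ sSup {r : ℝ | ∃ y > 0, r = (F.b y 0) ^ 2} / 4 := by
  obtain ⟨M, hM⟩ := hb
  have hbdd : BddAbove {r : ℝ | ∃ y > 0, r = F.b y 0} := ⟨M, fun r ⟨y, hy, hr⟩ => hr ▸ hM y hy⟩
  have hbdd_sq : BddAbove {r : ℝ | ∃ y > 0, r = F.b y 0 ^ 2} := ⟨M ^ 2, fun r ⟨y, hy, hr⟩ =>
    hr ▸ pow_le_pow_left₀ (F.b_pos y hy 0 ⟨le_rfl, F.T_pos⟩).le (hM y hy) 2⟩
  exact ⟨fun t ht x hx => hBC.b_le (fun y hy => le_csSup hbdd ⟨y, hy, rfl⟩) hx ht,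
    hBC.lifetime_le fun y hy => le_csSup hbdd_sq ⟨y, hy, rfl⟩⟩

/-- for `g₀ ∈ 𝒢`, `sup_x b(x,t) ≤ sup_x b(x,0)` for every `t ∈ [0,T)`,
and `T ≤ (sup_x b²(x,0))/4`. -/
theorem warpedBerger_finite_time (F : WarpedBergerFlow) (hBC : F.BoundedCurvature)
    (hG : F.InG) :
    (∀ t ∈ Set.Ico (0:ℝ) F.T, ∀ x > 0,
        F.b x t ≤ sSup {r : ℝ | ∃ y > 0, r = F.b y 0}) ∧
    F.T ≤ sSup {r : ℝ | ∃ y > 0, r = (F.b y 0) ^ 2} / 4 :=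
  warpedBerger_finite_time_general F hBC hG.2.2.1
end
end
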